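/- For each d ∈ {3, 4, 5} there exists a constant c > 0 (depending only on ξ, the sequence (x_k), and d) such that for every pair of polynomials P, R ∈ ℤ[T] with deg(R) = d and deg(P) ≤ 2, one has |P(ξ) + R(ξ)| ≥ c·(1 + ‖P‖)^(−γ)·‖R‖^(−e(d)), where e(3) = γ⁴ and e(d) = γ^(d+7) for d = 4, 5. -/

import Mathlib

open Polynomial Filter

noncomputable def gold : ℝ := (1 + Real.sqrt 5) / 2

def Mmat (k : ℕ) : Matrix (Fin 2) (Fin 2) ℤ := !![3, (-1)^k; (-1)^(k+1), 0]

noncomputable def Xnorm (x : ℕ → Matrix (Fin 2) (Fin 2) ℤ) (k : ℕ) : ℝ :=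
  max |(x k 0 0 : ℝ)| (max |(x k 0 1 : ℝ)| |(x k 1 1 : ℝ)|)

def MarkoffSeq (ξ : ℝ) (x : ℕ → Matrix (Fin 2) (Fin 2) ℤ) : Prop :=
  (∀ k, 1 ≤ k → x k 0 1 = x k 1 0) ∧
  (∀ k, 1 ≤ k → (x k).det = 1) ∧
  ∃ c₁ c₂ c₃ : ℝ, 0 < c₁ ∧ 0 < c₂ ∧ 0 < c₃ ∧ ∀ k, 1 ≤ k →
    (c₁ * Xnorm x k ^ gold ≤ Xnorm x (k+1) ∧ Xnorm x (k+1) ≤ c₂ * Xnorm x k ^ gold) ∧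
    (|(x k 0 0 : ℝ) * ξ - (x k 0 1 : ℝ)| ≤ c₃ / Xnorm x k ∧
     |(x k 0 1 : ℝ) * ξ - (x k 1 1 : ℝ)| ≤ c₃ / Xnorm x k) ∧
    (x (k+2) = x (k+1) * Mmat (k+1) * x k ∧ x (k+2) = x k * Mmat k * x (k+1)) ∧
    (Xnorm x k < Xnorm x (k+1) ∧ Xnorm x k < (1 + ξ^2) * |(x k 0 0 : ℝ)|)

def polyNorm (P : Polynomial ℤ) : ℕ := P.support.sup fun i => (P.coeff i).natAbs

noncomputable def distInt (η : ℝ) : ℝ := |η - round η|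

noncomputable def ratHeight (α : ℚ) : ℝ := max |(α.num : ℝ)| (α.den : ℝ)

def IsMinIntPoly (α : ℂ) (P : Polynomial ℤ) : Prop :=
  P ≠ 0 ∧ Polynomial.aeval α P = 0 ∧ P.content = 1 ∧ 0 < P.leadingCoeff ∧
  ∀ Q : Polynomial ℤ, Q ≠ 0 → Polynomial.aeval α Q = 0 → P.degree ≤ Q.degree

noncomputable def Qpoly (x : ℕ → Matrix (Fin 2) (Fin 2) ℤ) (k : ℕ) : Polynomial ℤ :=
  Polynomial.C (x k 0 1 * x (k+1) 1 1 - x k 1 1 * x (k+1) 0 1)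
  - Polynomial.C (x k 0 0 * x (k+1) 1 1 - x k 1 1 * x (k+1) 0 0) * Polynomial.X
  + Polynomial.C (x k 0 0 * x (k+1) 0 1 - x k 0 1 * x (k+1) 0 0) * Polynomial.X ^ 2

/-!
Let `a k`, `b k`, `c k` be the entries of `x k`, so that `(a k, b k, c k)` is within `O(1 / X k)` of
`a k • (1, ξ, ξ ^ 2)`. Multiplying `P(ξ) + R(ξ)` by `a T` therefore turns `P`, and the part of `R`
of degree at most two, into an integer up to an error `O((‖P‖ + ‖R‖) / X T)`, and the question is
how close `∑ rᵢ * (a T * ξ ^ i)`, summed over `3 ≤ i ≤ d`, can be to an integer.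

Two facts answer it. First, the recurrence `a (k + 3) = 3 * a (k + 1) * a (k + 2) - a k` and its
companions make `a T * ξ ^ i` almost periodic in `T` modulo `ℤ`, with period `6` (and, for `i = 3`,
antiperiodic with period `3`), so that `a T` may be replaced by `a (k + 2)` or `a (k + 4)` for a
suitable `k` much smaller than `T`. Second, expanding
`(a k * ξ) ^ n = (b k + (a k * ξ - b k)) ^ n` shows that `a k ^ n * (a (k + 4) * ξ ^ (n + 2))` is
close to an integer, and reducing the Markoff relations modulo a common divisor of that integer and
of `a k` shows that their gcd divides `8`. Hence the sum above is close to a rational number with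
denominator `a k ^ (d - 2)`, and this number is not an integer once `a k` is large compared with
`‖R‖`. Its distance to `ℤ` is then at least of order `X k ^ (2 - d)`; choosing `k` in terms of `‖R‖`
and then `T` in terms of `‖P‖`, `‖R‖` and `X k` gives the bound.
-/

/-! ### Powers of the golden ratio -/

lemma gold_sq : gold ^ 2 = gold + 1 := Real.goldenRatio_sq

lemma gold_pow_three : gold ^ 3 = 2 * gold + 1 := by
  linear_combination (gold + 1) * gold_sq

lemma gold_pow_four : gold ^ 4 = 3 * gold + 2 := by
  linear_combination (gold ^ 2 + gold + 2) * gold_sq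

lemma gold_pow_five : gold ^ 5 = 5 * gold + 3 := by
  linear_combination gold * gold_pow_four + 3 * gold_sq

lemma lt_gold : 1.61 < gold := by
  rw [gold, lt_div_iff₀ two_pos, ← sub_lt_iff_lt_add']
  exact Real.lt_sqrt_of_sq_lt (by norm_num)

lemma gold_pos : 0 < gold := Real.goldenRatio_pos

lemma gold_lt : gold < 1.62 := by
  rw [gold, div_lt_iff₀ two_pos, ← lt_sub_iff_add_lt']
  exact (Real.sqrt_lt' (by norm_num)).2 (by norm_num)

lemma neg_one_pow_sq {R : Type*} [CommRing R] (k : ℕ) : ((-1 : R) ^ k) ^ 2 = 1 := by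
  rw [pow_right_comm, neg_one_sq, one_pow]

/-! ### Markoff triples over a commutative ring -/

/-- The entries `a = x₀`, `b = x₁`, `c = x₂` of a sequence of symmetric matrices of determinant `1`
such that `x (k + 2) = x (k + 1) * M (k + 1) * x k`, over an arbitrary ring so that they can be
reduced modulo an integer. -/
structure MarkoffTriple {R : Type*} [CommRing R] (a b c : ℕ → R) : Prop where
  det : ∀ k, a k * c k - b k ^ 2 = 1
  mul00 : ∀ k, a (k + 2) =
    (3 * a (k + 1) + (-1) ^ k * b (k + 1)) * a k - (-1) ^ k * a (k + 1) * b k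
  mul01 : ∀ k, b (k + 2) =
    (3 * a (k + 1) + (-1) ^ k * b (k + 1)) * b k - (-1) ^ k * a (k + 1) * c k
  mul10 : ∀ k, b (k + 2) =
    (3 * b (k + 1) + (-1) ^ k * c (k + 1)) * a k - (-1) ^ k * b (k + 1) * b k
  mul11 : ∀ k, c (k + 2) =
    (3 * b (k + 1) + (-1) ^ k * c (k + 1)) * b k - (-1) ^ k * b (k + 1) * c k

/-- The expansion of `(b (k + 1) + δ) ^ n * f` in which the real number `δ ^ j * f` has been
replaced by its approximation `t j k`. -/
def binomialNear {R : Type*} [CommRing R] (b : ℕ → R) (t : ℕ → ℕ → R) (n k : ℕ) : R :=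
  ∑ j ∈ Finset.range (n + 1), b (k + 1) ^ (n - j) * t j k * n.choose j

/-- The integer approximation of `(a (k + 1) * ξ - b (k + 1)) ^ j * (a (k + 3) * ξ ^ 2)`;
only `j ≤ 1` is meaningful. -/
def tailTwo {R : Type*} [CommRing R] (c : ℕ → R) (j k : ℕ) : R :=
  match j with
  | 0 => c (k + 3)
  | _ => (-1) ^ k * c (k + 2)

/-- The integer approximation of `(a (k + 1) * ξ - b (k + 1)) ^ j * (a (k + 5) * ξ ^ 2)`;
only `j ≤ 3` is meaningful. -/
def tailFour {R : Type*} [CommRing R] (a b c : ℕ → R) (j k : ℕ) : R :=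
  match j with
  | 0 => c (k + 5)
  | 1 => (-1) ^ k * (3 * a (k + 2) * c (k + 4) + c (k + 3))
  | 2 => 9 * a (k + 2) ^ 2 * c (k + 2) - 6 * (-1) ^ k * b (k + 2) - 9 * a (k + 2) + c (k + 2)
  | _ => 9 * (-1) ^ k * a k * b (k + 2) ^ 2 - 6 * b k - (-1) ^ k * c (k + 3)

namespace MarkoffTriple

section CommRing

variable {R : Type*} [CommRing R] {a b c : ℕ → R}

lemma map {S : Type*} [CommRing S] (h : MarkoffTriple a b c) (f : R →+* S) :
    MarkoffTriple (fun k => f (a k)) (fun k => f (b k)) (fun k => f (c k)) where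
  det k := by simpa using congrArg f (h.det k)
  mul00 k := by simpa [map_ofNat] using congrArg f (h.mul00 k)
  mul01 k := by simpa [map_ofNat] using congrArg f (h.mul01 k)
  mul10 k := by simpa [map_ofNat] using congrArg f (h.mul10 k)
  mul11 k := by simpa [map_ofNat] using congrArg f (h.mul11 k)

lemma minor_succ (h : MarkoffTriple a b c) (k : ℕ) :
    a (k + 1) * b (k + 2) - b (k + 1) * a (k + 2) = (-1) ^ k * a k := by
  linear_combination a (k + 1) * h.mul10 k - b (k + 1) * h.mul00 k + (-1) ^ k * a k * h.det (k + 1)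

lemma minor_add_two (h : MarkoffTriple a b c) (k : ℕ) :
    a k * b (k + 2) - b k * a (k + 2) = -(-1) ^ k * a (k + 1) := by
  linear_combination a k * h.mul01 k - b k * h.mul00 k - (-1) ^ k * a (k + 1) * h.det k

lemma rec_a (h : MarkoffTriple a b c) (k : ℕ) :
    a (k + 3) = 3 * a (k + 1) * a (k + 2) - a k := by
  have h3 := h.mul00 (k + 1)
  rw [pow_succ] at h3
  linear_combination h3 - (-1) ^ k * h.minor_succ k - a k * neg_one_pow_sq (R := R) k

lemma minor_succ_bc (h : MarkoffTriple a b c) (k : ℕ) :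
    a (k + 1) * c (k + 2) - b (k + 1) * b (k + 2) = (-1) ^ k * b k := by
  linear_combination a (k + 1) * h.mul11 k - b (k + 1) * h.mul01 k + (-1) ^ k * b k * h.det (k + 1)

lemma rec_b (h : MarkoffTriple a b c) (k : ℕ) :
    b (k + 3) = 3 * a (k + 1) * b (k + 2) - b k := by
  have h3 := h.mul10 (k + 1)
  rw [pow_succ] at h3
  linear_combination h3 - (-1) ^ k * h.minor_succ_bc k - b k * neg_one_pow_sq (R := R) k

lemma rec_c (h : MarkoffTriple a b c) (k : ℕ) :
    c (k + 3) = 3 * a (k + 1) * c (k + 2) - c k := by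
  have h3 := h.mul11 (k + 1)
  have h2 : c (k + 1) * b (k + 2) - b (k + 1) * c (k + 2) = 3 * b k - (-1) ^ k * c k := by
    linear_combination c (k + 1) * h.mul01 k - b (k + 1) * h.mul11 k +
      (3 * b k - (-1) ^ k * c k) * h.det (k + 1)
  rw [pow_succ] at h3
  linear_combination h3 - 3 * h.minor_succ_bc k + (-1) ^ k * h2 - c k * neg_one_pow_sq (R := R) k

lemma minor_add_three (h : MarkoffTriple a b c) (k : ℕ) :
    a (k + 1) * b (k + 4) - b (k + 1) * a (k + 4) = 3 * (-1) ^ k * a (k + 2) ^ 2 := by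
  have m2 := h.minor_add_two (k + 1)
  rw [pow_succ] at m2
  linear_combination a (k + 1) * h.rec_b (k + 1) - b (k + 1) * h.rec_a (k + 1) +
    3 * a (k + 2) * m2

lemma minor_add_four (h : MarkoffTriple a b c) (k : ℕ) :
    a (k + 1) * b (k + 5) - b (k + 1) * a (k + 5) =
      (-1) ^ k * (3 * a (k + 2) * a (k + 4) + a (k + 3)) := by
  linear_combination a (k + 1) * h.rec_b (k + 2) - b (k + 1) * h.rec_a (k + 2) +
    3 * a (k + 3) * h.minor_add_three k - h.minor_succ k -
    (-1) ^ k * (3 * a (k + 2) * h.rec_a (k + 1) + h.rec_a k)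

lemma b_sq_of_eq_zero (h : MarkoffTriple a b c) {k : ℕ} (h0 : a k = 0) : b k ^ 2 = -1 := by
  linear_combination c k * h0 - h.det k

lemma a_add_two_of_eq_zero (h : MarkoffTriple a b c) {k : ℕ} (h0 : a (k + 1) = 0) :
    a (k + 2) = (-1) ^ k * b (k + 1) * a k := by
  linear_combination h.mul00 k + (3 * a k - (-1) ^ k * b k) * h0

lemma b_add_two_of_eq_zero (h : MarkoffTriple a b c) {k : ℕ} (h0 : a (k + 1) = 0) :
    b (k + 2) = (-1) ^ k * b (k + 1) * b k := by
  linear_combination h.mul01 k + (3 * b k - (-1) ^ k * c k) * h0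

lemma c_add_three_of_eq_zero (h : MarkoffTriple a b c) {k : ℕ} (h0 : a (k + 1) = 0) :
    c (k + 3) = -c k := by
  linear_combination h.rec_c k + 3 * c (k + 2) * h0

lemma a_mul_c_succ_of_eq_zero (h : MarkoffTriple a b c) {k : ℕ} (h0 : a (k + 1) = 0) :
    a k * c (k + 1) = 2 * b (k + 1) * b k - 3 * (-1) ^ k * b (k + 1) * a k := by
  linear_combination (-1) ^ k * (h.b_add_two_of_eq_zero h0 - h.mul10 k) +
    (2 * b (k + 1) * b k - a k * c (k + 1)) * neg_one_pow_sq (R := R) k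

lemma a_mul_c_add_two_of_eq_zero (h : MarkoffTriple a b c) {k : ℕ} (h0 : a (k + 1) = 0) :
    a k * c (k + 2) = (-1) ^ k * b (k + 1) * (b k ^ 2 - 1) := by
  linear_combination a k * h.mul11 k +
    (-1) ^ k * (b k * h.a_mul_c_succ_of_eq_zero h0 - b (k + 1) * h.det k) -
    3 * a k * b k * b (k + 1) * neg_one_pow_sq (R := R) k

lemma binomialNear_tailTwo_of_eq_zero (h : MarkoffTriple a b c) {k : ℕ} (h0 : a (k + 1) = 0) :
    a k * binomialNear b (tailTwo c) 1 k = -2 * b (k + 1) := by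
  simp only [binomialNear, Finset.sum_range_succ, Finset.sum_range_zero, tailTwo, Nat.choose]
  push_cast
  linear_combination b (k + 1) * (a k * h.c_add_three_of_eq_zero h0 - h.det k) +
    (-1) ^ k * h.a_mul_c_add_two_of_eq_zero h0 +
    b (k + 1) * (b k ^ 2 - 1) * neg_one_pow_sq (R := R) k

lemma tailFour_add_of_eq_zero (h : MarkoffTriple a b c) {k : ℕ} (h0 : a (k + 1) = 0) :
    a k * (tailFour a b c 1 k + b (k + 1) * tailFour a b c 0 k) = -2 * (-1) ^ k ∧
    a k * (tailFour a b c 2 k + tailFour a b c 0 k) = 0 ∧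
    a k * (tailFour a b c 3 k - b (k + 1) * tailFour a b c 0 k) = 2 * (-1) ^ k := by
  have hdet := h.det k
  have hsign := neg_one_pow_sq (R := R) k
  have hb := h.b_sq_of_eq_zero h0
  have ha2 := h.a_add_two_of_eq_zero h0
  have hb2 := h.b_add_two_of_eq_zero h0
  have hc1 := h.a_mul_c_succ_of_eq_zero h0
  have hc2 := h.a_mul_c_add_two_of_eq_zero h0
  have hc3 := h.c_add_three_of_eq_zero h0
  have hc4 : c (k + 4) = -3 * a (k + 2) * c k - c (k + 1) := by
    linear_combination h.rec_c (k + 1) + 3 * a (k + 2) * hc3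
  have hc5 : c (k + 5) = -3 * a k * c (k + 4) - c (k + 2) := by
    linear_combination h.rec_c (k + 2) + 3 * c (k + 4) * (h.rec_a k + 3 * a (k + 2) * h0)
  simp only [tailFour]
  refine ⟨?_, ?_, ?_⟩
  · linear_combination 3 * (-1) ^ k * a k * c (k + 4) * ha2 +
      3 * a k ^ 2 * b (k + 1) * c (k + 4) * hsign + a k * b (k + 1) * hc5 +
      (-1) ^ k * (a k * hc3 - hdet) - b (k + 1) * hc2 - (-1) ^ k * (b k ^ 2 - 1) * hb
  · linear_combination a k * hc5 - 3 * a k ^ 2 * hc4 + 9 * a k * a (k + 2) * hdet +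
      3 * a k * hc1 - 6 * (-1) ^ k * a k * hb2 + 9 * a (k + 2) ^ 2 * hc2 +
      (9 * (-1) ^ k * b (k + 1) * (b k ^ 2 - 1) * (a (k + 2) + (-1) ^ k * b (k + 1) * a k) +
        9 * a k * b k ^ 2) * ha2 +
      (9 * (-1) ^ k * b (k + 1) ^ 3 * a k ^ 2 * (b k ^ 2 - 1) -
        6 * a k * b (k + 1) * b k) * hsign +
      9 * (-1) ^ k * b (k + 1) * a k ^ 2 * (b k ^ 2 - 1) * hb
  · linear_combination -a k * b (k + 1) * hc5 + 3 * a k ^ 2 * b (k + 1) * hc4 -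
      9 * a k * b (k + 1) * a (k + 2) * hdet - 3 * a k * b (k + 1) * hc1 + b (k + 1) * hc2 +
      (-1) ^ k * (hdet - a k * hc3) - 9 * a k * b (k + 1) * (1 + b k ^ 2) * ha2 +
      9 * (-1) ^ k * a k ^ 2 * (b (k + 2) + (-1) ^ k * b (k + 1) * b k) * hb2 +
      9 * (-1) ^ k * a k ^ 2 * b (k + 1) ^ 2 * b k ^ 2 * hsign +
      ((-1) ^ k * (b k ^ 2 - 1) - 6 * a k * b k) * hb

lemma binomialNear_tailFour_of_eq_zero (h : MarkoffTriple a b c) {k n : ℕ}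
    (h0 : a (k + 1) = 0) (hn : n ∈ Finset.Icc 1 3) :
    a k * binomialNear b (tailFour a b c) n k = (-1) ^ k * b (k + 1) * (2 * b (k + 1)) ^ n := by
  obtain ⟨t1, t2, t3⟩ := h.tailFour_add_of_eq_zero h0
  have hw := h.b_sq_of_eq_zero h0
  fin_cases hn <;>
    simp only [binomialNear, Finset.sum_range_succ, Finset.sum_range_zero, Nat.choose] <;>
    push_cast
  · linear_combination t1 - 2 * (-1) ^ k * hw
  · linear_combination 2 * b (k + 1) * t1 + t2 -
      (a k * tailFour a b c 0 k + 4 * (-1) ^ k * b (k + 1)) * hw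
  · linear_combination 3 * b (k + 1) ^ 2 * t1 + 3 * b (k + 1) * t2 + t3 -
      (2 * b (k + 1) * a k * tailFour a b c 0 k + (8 * b (k + 1) ^ 2 - 2) * (-1) ^ k) * hw

end CommRing

lemma gcd_dvd_of_zmod {m n : ℤ} {d : ℕ}
    (h : ∀ g : ℕ, (m : ZMod g) = 0 → (n : ZMod g) = 0 → (d : ZMod g) = 0) : Int.gcd m n ∣ d :=
  (ZMod.natCast_eq_zero_iff _ _).1 <| h _
    ((ZMod.intCast_zmod_eq_zero_iff_dvd _ _).2 (Int.gcd_dvd_left ..))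
    ((ZMod.intCast_zmod_eq_zero_iff_dvd _ _).2 (Int.gcd_dvd_right ..))

variable {a b c : ℕ → ℤ}

lemma gcd_binomialNear_tailTwo_dvd (h : MarkoffTriple a b c) (k : ℕ) :
    Int.gcd (a (k + 1)) (binomialNear b (tailTwo c) 1 k) ∣ 8 := by
  refine gcd_dvd_of_zmod fun g ha hnear => ?_
  have h' := h.map (Int.castRingHom (ZMod g))
  have hmap : binomialNear (fun k => Int.castRingHom (ZMod g) (b k))
      (tailTwo fun k => Int.castRingHom (ZMod g) (c k)) 1 k =
      ((binomialNear b (tailTwo c) 1 k : ℤ) : ZMod g) := by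
    simp [binomialNear, tailTwo, Finset.sum_range_succ]
  have hb : (b (k + 1) : ZMod g) ^ 2 = -1 := h'.b_sq_of_eq_zero ha
  have key : (a k : ZMod g) * 0 = -2 * b (k + 1) := by
    rw [← hnear, ← hmap]
    exact h'.binomialNear_tailTwo_of_eq_zero ha
  push_cast
  linear_combination -4 * (b (k + 1) : ZMod g) * key + 8 * hb

lemma gcd_binomialNear_tailFour_dvd (h : MarkoffTriple a b c) {n : ℕ} (hn : n ∈ Finset.Icc 1 3)
    (k : ℕ) : Int.gcd (a (k + 1)) (binomialNear b (tailFour a b c) n k) ∣ 8 := by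
  refine gcd_dvd_of_zmod fun g ha hnear => ?_
  have h' := h.map (Int.castRingHom (ZMod g))
  have hmap : binomialNear (fun k => Int.castRingHom (ZMod g) (b k))
      (tailFour (fun k => Int.castRingHom (ZMod g) (a k)) (fun k => Int.castRingHom (ZMod g) (b k))
        fun k => Int.castRingHom (ZMod g) (c k)) n k =
      ((binomialNear b (tailFour a b c) n k : ℤ) : ZMod g) := by
    fin_cases hn <;> simp [binomialNear, tailFour, Finset.sum_range_succ]
  have hb : (b (k + 1) : ZMod g) ^ 2 = -1 := h'.b_sq_of_eq_zero ha
  have key : (a k : ZMod g) * 0 = (-1) ^ k * b (k + 1) * (2 * b (k + 1)) ^ n := by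
    rw [← hnear, ← hmap]
    exact h'.binomialNear_tailFour_of_eq_zero ha hn
  have hinv : (b (k + 1) : ZMod g) * -b (k + 1) = 1 := by linear_combination -hb
  have hpow : (2 : ZMod g) ^ n = 0 := by
    calc (2 : ZMod g) ^ n
        = 2 ^ n * ((-1) ^ k) ^ 2 * ((b (k + 1) : ZMod g) * -b (k + 1)) ^ (n + 1) := by
          rw [hinv, neg_one_pow_sq]; simp
      _ = (-1) ^ k * b (k + 1) * (2 * b (k + 1)) ^ n * ((-1) ^ k * (-b (k + 1)) ^ (n + 1)) := by
          ring
      _ = 0 := by rw [← key]; ring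
  obtain ⟨-, hn3⟩ := Finset.mem_Icc.1 hn
  calc ((8 : ℕ) : ZMod g) = 2 ^ (3 - n) * 2 ^ n := by rw [pow_sub_mul_pow _ hn3]; norm_num
    _ = 0 := by rw [hpow, mul_zero]

end MarkoffTriple

/-! ### Orders of magnitude along a Markoff sequence -/

/-- The comparison scale of a Markoff sequence: `X k` is bounded above and below by multiples of
`scale lam k`, while `scale lam (k + n)` is exactly the power `gold ^ n` of `scale lam k`. -/
noncomputable def scale (lam : ℝ) (k : ℕ) : ℝ := Real.exp (lam * gold ^ k)

lemma scale_pos (lam : ℝ) (k : ℕ) : 0 < scale lam k := Real.exp_pos _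

lemma scale_add (lam : ℝ) (k n : ℕ) : scale lam (k + n) = scale lam k ^ gold ^ n := by
  rw [scale, scale, ← Real.exp_mul, pow_add, mul_assoc]

lemma scale_add_rpow (lam : ℝ) (k n : ℕ) (s : ℝ) :
    scale lam (k + n) ^ s = scale lam k ^ (gold ^ n * s) := by
  rw [scale_add, ← Real.rpow_mul (scale_pos lam k).le]

lemma one_le_scale {lam : ℝ} (hlam : 0 < lam) (k : ℕ) : 1 ≤ scale lam k :=
  Real.one_le_exp (mul_nonneg hlam.le (pow_pos gold_pos k).le)

lemma scale_strictMono {lam : ℝ} (hlam : 0 < lam) : StrictMono (scale lam) := fun _ _ hkl =>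
  Real.exp_lt_exp.2 <| mul_lt_mul_of_pos_left
    (pow_lt_pow_right₀ (by linarith [lt_gold]) hkl) hlam

lemma tendsto_scale {lam : ℝ} (hlam : 0 < lam) : Tendsto (scale lam) atTop atTop :=
  Real.tendsto_exp_atTop.comp <|
    (tendsto_pow_atTop_atTop_of_one_lt (by linarith [lt_gold])).const_mul_atTop hlam

/-- `f k` is at most a constant times `scale lam k ^ s`, uniformly in all `k`. -/
def HasOrder (lam : ℝ) (f : ℕ → ℝ) (s : ℝ) : Prop :=
  f =O[⊤] fun k => scale lam k ^ s

namespace HasOrder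

variable {lam s t : ℝ} {f g : ℕ → ℝ}

lemma norm_scale_rpow (lam s : ℝ) (k : ℕ) : ‖scale lam k ^ s‖ = scale lam k ^ s :=
  Real.norm_of_nonneg (Real.rpow_nonneg (scale_pos lam k).le s)

lemma of_bound (C : ℝ) (hf : ∀ k, |f k| ≤ C * scale lam k ^ s) : HasOrder lam f s :=
  Asymptotics.IsBigO.of_bound C <| Eventually.of_forall fun k => by
    rw [norm_scale_rpow]
    exact hf k

lemma of_le_div {X : ℕ → ℝ} {A K : ℝ} (hX : ∀ k, 0 < X k) (hscale : ∀ k, scale lam k ≤ A * X k)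
    (hK : 0 ≤ K) (hf : ∀ k, |f k| ≤ K / X k) : HasOrder lam f (-1) :=
  of_bound (K * A) fun k => (hf k).trans <| by
    rw [Real.rpow_neg_one, ← div_eq_mul_inv, div_le_div_iff₀ (hX k) (scale_pos lam k), mul_assoc]
    exact mul_le_mul_of_nonneg_left (hscale k) hK

lemma exists_bound (hf : HasOrder lam f s) : ∃ C, 0 < C ∧ ∀ k, |f k| ≤ C * scale lam k ^ s := by
  obtain ⟨C, hC, hbound⟩ := Asymptotics.IsBigO.exists_pos hf
  refine ⟨C, hC, fun k => ?_⟩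
  have hk := eventually_top.1 (Asymptotics.isBigOWith_iff.1 hbound) k
  rwa [norm_scale_rpow, Real.norm_eq_abs] at hk

lemma add (hf : HasOrder lam f s) (hg : HasOrder lam g s) :
    HasOrder lam (fun k => f k + g k) s :=
  Asymptotics.IsBigO.add hf hg

lemma sub (hf : HasOrder lam f s) (hg : HasOrder lam g s) :
    HasOrder lam (fun k => f k - g k) s :=
  Asymptotics.IsBigO.sub hf hg

lemma const_mul (hf : HasOrder lam f s) (r : ℝ) : HasOrder lam (fun k => r * f k) s :=
  Asymptotics.IsBigO.const_mul_left hf r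

lemma mul (hf : HasOrder lam f s) (hg : HasOrder lam g t) :
    HasOrder lam (fun k => f k * g k) (s + t) := by
  simpa only [HasOrder, Real.rpow_add (scale_pos lam _)] using Asymptotics.IsBigO.mul hf hg

lemma sign_mul (hf : HasOrder lam f s) : HasOrder lam (fun k => (-1) ^ k * f k) s :=
  Asymptotics.isBigO_norm_left.1 <| by simpa using Asymptotics.isBigO_norm_left.2 hf

lemma pow (hf : HasOrder lam f s) (n : ℕ) : HasOrder lam (fun k => f k ^ n) (n * s) := by
  simpa only [HasOrder, ← Real.rpow_mul_natCast (scale_pos lam _).le, mul_comm s] using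
    Asymptotics.IsBigO.pow hf n

lemma shift (hf : HasOrder lam f s) (n : ℕ) :
    HasOrder lam (fun k => f (k + n)) (gold ^ n * s) := by
  simpa only [HasOrder, Function.comp_def, scale_add_rpow] using
    Asymptotics.IsBigO.comp_tendsto hf (tendsto_top (f := (· + n)))

lemma mono (hf : HasOrder lam f s) (hlam : 0 < lam) (hst : s ≤ t) : HasOrder lam f t :=
  Asymptotics.IsBigO.trans hf <| .of_norm_le fun k => by
    rw [norm_scale_rpow]
    exact Real.rpow_le_rpow_of_exponent_le (one_le_scale hlam k) hst

end HasOrder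

lemma exists_abs_sub_mul_pow_le {θ K : ℝ} (hθ : 1 < θ) {u : ℕ → ℝ}
    (hu : ∀ k, |u (k + 1) - θ * u k| ≤ K) : ∃ l, ∀ k, |u k - l * θ ^ k| ≤ K / (θ - 1) := by
  have hθ0 : 0 < θ := one_pos.trans hθ
  have hdist : ∀ k, dist (u k / θ ^ k) (u (k + 1) / θ ^ (k + 1)) ≤ K / θ * θ⁻¹ ^ k := fun k => by
    rw [dist_comm, Real.dist_eq, show u (k + 1) / θ ^ (k + 1) - u k / θ ^ k =
      (u (k + 1) - θ * u k) / (θ * θ ^ k) by field_simp; ring, abs_div,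
      abs_of_pos (a := θ * θ ^ k) (by positivity), inv_pow, ← div_eq_mul_inv, div_div]
    exact div_le_div_of_nonneg_right (hu k) (by positivity)
  obtain ⟨l, hl⟩ := cauchySeq_tendsto_of_complete
    (cauchySeq_of_le_geometric _ _ (inv_lt_one_of_one_lt₀ hθ) hdist)
  refine ⟨l, fun k => ?_⟩
  have h := dist_le_of_le_geometric_of_tendsto _ _ (inv_lt_one_of_one_lt₀ hθ) hdist hl k
  have hθ1 : θ - 1 ≠ 0 := sub_ne_zero.2 hθ.ne'
  rw [Real.dist_eq, show u k / θ ^ k - l = (u k - l * θ ^ k) / θ ^ k by field_simp, abs_div,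
    abs_of_pos (pow_pos hθ0 k), div_le_iff₀ (pow_pos hθ0 k)] at h
  refine h.trans_eq ?_
  rw [inv_pow]
  field_simp

/-! ### Approximation to `ξ` and `ξ ^ 2` -/

/-- The error of `b k` as an approximation of `a k * ξ`. -/
def linErr (ξ : ℝ) (a b : ℕ → ℤ) (k : ℕ) : ℝ := a k * ξ - b k

/-- The error of `c k` as an approximation of `a k * ξ ^ 2`. -/
def quadErr (ξ : ℝ) (a c : ℕ → ℤ) (k : ℕ) : ℝ := a k * ξ ^ 2 - c k

/-- The error of `-(-1) ^ k / 3` as an approximation of `a k * (a k * ξ - b k)`. -/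
noncomputable def prodErr (ξ : ℝ) (a b : ℕ → ℤ) (k : ℕ) : ℝ :=
  a k * linErr ξ a b k + (-1) ^ k / 3

/-- The integers `a k`, `b k`, `c k` form a Markoff triple and approximate `ξ` at the scale
`scale lam k`, in the sense that `(a k, b k, c k)` is as close to `a k • (1, ξ, ξ ^ 2)` as the
inverse of its size. -/
structure MarkoffApprox (ξ lam : ℝ) (a b c : ℕ → ℤ) : Prop where
  triple : MarkoffTriple a b c
  lam_pos : 0 < lam
  a_ne_zero : ∀ k, a k ≠ 0
  hasOrder_a_zero : HasOrder lam (fun k => a k) 1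
  hasOrder_inv_zero : HasOrder lam (fun k => (a k : ℝ)⁻¹) (-1)
  hasOrder_linErr_zero : HasOrder lam (linErr ξ a b) (-1)
  hasOrder_quadErr_zero : HasOrder lam (quadErr ξ a c) (-1)

namespace MarkoffApprox

variable {ξ lam : ℝ} {a b c : ℕ → ℤ}

lemma mono (h : MarkoffApprox ξ lam a b c) {f : ℕ → ℝ} {s t : ℝ} (hf : HasOrder lam f s)
    (hst : s ≤ t := by
      push_cast
      linarith [gold_sq, gold_pow_three, gold_pow_four, gold_pow_five, lt_gold, gold_lt]) :
    HasOrder lam f t :=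
  hf.mono h.lam_pos hst

lemma triple_real (h : MarkoffApprox ξ lam a b c) :
    MarkoffTriple (fun k => (a k : ℝ)) (fun k => (b k : ℝ)) (fun k => (c k : ℝ)) :=
  h.triple.map (Int.castRingHom ℝ)

lemma cast_a_ne_zero (h : MarkoffApprox ξ lam a b c) (k : ℕ) : (a k : ℝ) ≠ 0 :=
  Int.cast_ne_zero.2 (h.a_ne_zero k)

lemma hasOrder_a (h : MarkoffApprox ξ lam a b c) (n : ℕ) :
    HasOrder lam (fun k => a (k + n)) (gold ^ n) :=
  h.mono (h.hasOrder_a_zero.shift n)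

lemma hasOrder_inv (h : MarkoffApprox ξ lam a b c) (n : ℕ) :
    HasOrder lam (fun k => (a (k + n) : ℝ)⁻¹) (-gold ^ n) :=
  h.mono (h.hasOrder_inv_zero.shift n)

lemma hasOrder_linErr (h : MarkoffApprox ξ lam a b c) (n : ℕ) :
    HasOrder lam (fun k => linErr ξ a b (k + n)) (-gold ^ n) :=
  h.mono (h.hasOrder_linErr_zero.shift n)

lemma hasOrder_quadErr (h : MarkoffApprox ξ lam a b c) (n : ℕ) :
    HasOrder lam (fun k => quadErr ξ a c (k + n)) (-gold ^ n) :=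
  h.mono (h.hasOrder_quadErr_zero.shift n)

lemma hasOrder_prodErr (h : MarkoffApprox ξ lam a b c) (n : ℕ) :
    HasOrder lam (fun k => prodErr ξ a b (k + n)) (-2 * gold ^ n) := by
  have heq : prodErr ξ a b = fun k => (a (k + 2) : ℝ)⁻¹ * (a k * (a k * linErr ξ a b (k + 2)) +
      1 / 3 * (a (k + 1) * linErr ξ a b k - a k * linErr ξ a b (k + 1))) := by
    funext k
    have hne := h.cast_a_ne_zero (k + 2)
    have h0 := h.triple_real.mul00 k
    have hm := h.triple_real.minor_add_two k
    rw [eq_inv_mul_iff_mul_eq₀ hne]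
    simp only [prodErr, linErr]
    linear_combination a k * hm + (-1) ^ k / 3 * h0 +
      1 / 3 * (a k * b (k + 1) - a (k + 1) * b k) * neg_one_pow_sq (R := ℝ) k
  have hnum := (h.mono (t := gold - 1)
    ((h.hasOrder_a 0).mul ((h.hasOrder_a 0).mul (h.hasOrder_linErr 2)))).add <| HasOrder.const_mul
      ((h.mono ((h.hasOrder_a 1).mul (h.hasOrder_linErr 0))).sub
        (h.mono ((h.hasOrder_a 0).mul (h.hasOrder_linErr 1)))) (1 / 3)
  have h0 : HasOrder lam (prodErr ξ a b) (-2) := by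
    rw [heq]
    exact h.mono ((h.hasOrder_inv 2).mul hnum)
  exact h.mono (h0.shift n)

end MarkoffApprox

/-! ### Almost periodicity modulo the integers -/

/-- `E k` lies within a constant times `scale lam k ^ s` of an integer. -/
def NearInt (lam : ℝ) (E : ℕ → ℝ) (s : ℝ) : Prop :=
  ∃ n : ℕ → ℤ, HasOrder lam (fun k => E k - n k) s

namespace NearInt

variable {lam s : ℝ} {E F : ℕ → ℝ}

lemma add (hE : NearInt lam E s) (hF : NearInt lam F s) :
    NearInt lam (fun k => E k + F k) s := by
  obtain ⟨m, hm⟩ := hE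
  obtain ⟨n, hn⟩ := hF
  refine ⟨fun k => m k + n k, ?_⟩
  convert hm.add hn using 2 with k
  push_cast
  ring

lemma intCast_mul (hE : NearInt lam E s) (r : ℤ) : NearInt lam (fun k => r * E k) s := by
  obtain ⟨n, hn⟩ := hE
  refine ⟨fun k => r * n k, ?_⟩
  convert hn.const_mul r using 2 with k
  push_cast
  ring

lemma sign_mul (hE : NearInt lam E s) : NearInt lam (fun k => (-1) ^ k * E k) s := by
  obtain ⟨n, hn⟩ := hE
  refine ⟨fun k => (-1) ^ k * n k, ?_⟩
  convert hn.sign_mul using 2 with k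
  push_cast
  ring

lemma shift (hE : NearInt lam E s) (n : ℕ) :
    NearInt lam (fun k => E (k + n)) (gold ^ n * s) := by
  obtain ⟨m, hm⟩ := hE
  exact ⟨fun k => m (k + n), hm.shift n⟩

lemma mono {t : ℝ} (hE : NearInt lam E s) (hlam : 0 < lam) (hst : s ≤ t) : NearInt lam E t := by
  obtain ⟨n, hn⟩ := hE
  exact ⟨n, hn.mono hlam hst⟩

end NearInt

namespace MarkoffApprox

variable {ξ lam : ℝ} {a b c : ℕ → ℤ}

lemma hasOrder_b (h : MarkoffApprox ξ lam a b c) (n : ℕ) :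
    HasOrder lam (fun k => b (k + n)) (gold ^ n) := by
  have hpos := pow_pos gold_pos n
  convert ((h.hasOrder_a n).const_mul ξ).sub (h.mono (h.hasOrder_linErr n)) using 2 with k
  simp only [linErr]
  ring

lemma hasOrder_c (h : MarkoffApprox ξ lam a b c) (n : ℕ) :
    HasOrder lam (fun k => c (k + n)) (gold ^ n) := by
  have hpos := pow_pos gold_pos n
  convert ((h.hasOrder_a n).const_mul (ξ ^ 2)).sub (h.mono (h.hasOrder_quadErr n)) using 2 with k
  simp only [quadErr]
  ring

lemma a_mul_quadErr (h : MarkoffApprox ξ lam a b c) (k : ℕ) :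
    a k * quadErr ξ a c k = 2 * ξ * (a k * linErr ξ a b k) - linErr ξ a b k ^ 2 - 1 := by
  simp only [quadErr, linErr]
  linear_combination -h.triple_real.det k

lemma quadErr_eq (h : MarkoffApprox ξ lam a b c) (k : ℕ) :
    quadErr ξ a c k = 2 * ξ * linErr ξ a b k - (a k : ℝ)⁻¹ * (linErr ξ a b k ^ 2 + 1) := by
  have hne := h.cast_a_ne_zero k
  rw [← mul_right_inj' hne, h.a_mul_quadErr]
  field_simp
  ring

lemma linErr_succ (h : MarkoffApprox ξ lam a b c) (k : ℕ) :
    a (k + 2) * linErr ξ a b (k + 1) - a (k + 1) * linErr ξ a b (k + 2) = (-1) ^ k * a k := by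
  simp only [linErr]
  linear_combination h.triple_real.minor_succ k

lemma linErr_add_two (h : MarkoffApprox ξ lam a b c) (k : ℕ) :
    a (k + 2) * linErr ξ a b k - a k * linErr ξ a b (k + 2) = -(-1) ^ k * a (k + 1) := by
  simp only [linErr]
  linear_combination h.triple_real.minor_add_two k

lemma hasOrder_mul_succ (h : MarkoffApprox ξ lam a b c) :
    HasOrder lam (fun k => a (k + 2) * a (k + 3) * ξ ^ 4 - c (k + 2) * c (k + 3) +
      (2 * (-1) ^ k * ξ ^ 3 + 3 * ξ ^ 2) * a (k + 1)) (-gold) := by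
  convert (h.mono (t := -gold) ((h.hasOrder_c 2).mul (h.hasOrder_quadErr 3))).add
    (HasOrder.const_mul
    ((h.mono (t := -gold) (((h.hasOrder_a 2).mul (h.hasOrder_linErr 3)).const_mul (2 * ξ))).add
      ((h.mono (t := -gold) ((h.hasOrder_inv 2).mul (h.hasOrder_a 0))).sub
        (h.mono (((h.hasOrder_inv 2).mul (h.hasOrder_a 3)).mul ((h.hasOrder_linErr 2).pow 2)))))
    (ξ ^ 2)) using 2 with k
  have m := h.linErr_succ (k + 1)
  have hc : (c (k + 2) : ℝ) = a (k + 2) * ξ ^ 2 - quadErr ξ a c (k + 2) := by simp [quadErr]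
  have hc' : (c (k + 3) : ℝ) = a (k + 3) * ξ ^ 2 - quadErr ξ a c (k + 3) := by simp [quadErr]
  rw [hc', hc, h.quadErr_eq (k + 2)]
  simp only [pow_succ _ k, add_assoc, Nat.reduceAdd] at m
  linear_combination 2 * ξ ^ 3 * m - ξ ^ 2 * (a (k + 2) : ℝ)⁻¹ * h.triple_real.rec_a k -
    3 * ξ ^ 2 * a (k + 1) * mul_inv_cancel₀ (h.cast_a_ne_zero (k + 2))

lemma hasOrder_mul_add_two (h : MarkoffApprox ξ lam a b c) :
    HasOrder lam (fun k => a (k + 1) * a (k + 3) * ξ ^ 4 - c (k + 1) * c (k + 3) -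
      (2 * (-1) ^ k * ξ ^ 3 - 3 * ξ ^ 2) * a (k + 2)) (1 - gold) := by
  convert (h.mono (t := 1 - gold) ((h.hasOrder_c 1).mul (h.hasOrder_quadErr 3))).add
    (HasOrder.const_mul
    ((h.mono (t := 1 - gold) (((h.hasOrder_a 1).mul (h.hasOrder_linErr 3)).const_mul (2 * ξ))).add
      ((h.mono (t := 1 - gold) ((h.hasOrder_inv 1).mul (h.hasOrder_a 0))).sub
        (h.mono (((h.hasOrder_inv 1).mul (h.hasOrder_a 3)).mul ((h.hasOrder_linErr 1).pow 2)))))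
    (ξ ^ 2)) using 2 with k
  have m := h.linErr_add_two (k + 1)
  have hc : (c (k + 1) : ℝ) = a (k + 1) * ξ ^ 2 - quadErr ξ a c (k + 1) := by simp [quadErr]
  have hc' : (c (k + 3) : ℝ) = a (k + 3) * ξ ^ 2 - quadErr ξ a c (k + 3) := by simp [quadErr]
  rw [hc', hc, h.quadErr_eq (k + 1)]
  simp only [pow_succ _ k, add_assoc, Nat.reduceAdd] at m
  linear_combination 2 * ξ ^ 3 * m - ξ ^ 2 * (a (k + 1) : ℝ)⁻¹ * h.triple_real.rec_a k -
    3 * ξ ^ 2 * a (k + 2) * mul_inv_cancel₀ (h.cast_a_ne_zero (k + 1))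

lemma hasOrder_sq (h : MarkoffApprox ξ lam a b c) :
    HasOrder lam (fun k => (a k * ξ ^ 2) ^ 2 - c k ^ 2 + 2 * ξ ^ 2 + 4 / 3 * (-1) ^ k * ξ ^ 3)
      (-2) := by
  convert ((h.mono (t := -2) ((h.hasOrder_prodErr 0).const_mul (4 * ξ ^ 3))).sub
    (h.mono (((h.hasOrder_linErr 0).pow 2).const_mul (2 * ξ ^ 2)))).sub
    (h.mono ((h.hasOrder_quadErr 0).pow 2)) using 2 with k
  have hc : (c k : ℝ) = a k * ξ ^ 2 - quadErr ξ a c k := by simp [quadErr]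
  rw [hc]
  simp only [prodErr, add_zero]
  linear_combination 2 * ξ ^ 2 * h.a_mul_quadErr k

lemma hasOrder_linErr_mul_sq_succ (h : MarkoffApprox ξ lam a b c) :
    HasOrder lam (fun k => linErr ξ a b (k + 1) * a (k + 2) ^ 2 + (-1) ^ k / 3 * a (k + 1) -
      (-1) ^ k * a k * a (k + 2)) (gold - 2 * gold ^ 2) := by
  convert h.mono (t := gold - 2 * gold ^ 2) ((h.hasOrder_a 1).mul (h.hasOrder_prodErr 2))
    using 2 with k
  simp only [prodErr, pow_add _ k]
  linear_combination a (k + 2) * h.linErr_succ k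

lemma hasOrder_linErr_mul_sq_pred (h : MarkoffApprox ξ lam a b c) :
    HasOrder lam (fun k => linErr ξ a b (k + 4) * a (k + 3) ^ 2 + (-1) ^ k / 3 * a (k + 1))
      (-gold) := by
  have hprod := h.mono (t := -gold)
    (((h.hasOrder_inv 4).mul (h.hasOrder_prodErr 4)).mul ((h.hasOrder_a 3).pow 2))
  have hquot := (h.mono (t := -gold)
    ((h.hasOrder_inv 4).mul ((h.hasOrder_a 0).mul (h.hasOrder_a 3)))).sub
    (h.mono ((h.hasOrder_inv 4).mul ((h.hasOrder_a 1).pow 2)))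
  convert hprod.add (hquot.const_mul (1 / 3)).sign_mul using 2 with k
  have hinv := mul_inv_cancel₀ (h.cast_a_ne_zero (k + 4))
  have r := h.triple_real.rec_a (k + 1)
  simp only [prodErr, pow_add _ k, add_assoc, Nat.reduceAdd, add_zero] at r ⊢
  linear_combination -(linErr ξ a b (k + 4) * a (k + 3) ^ 2 + (-1) ^ k / 3 * a (k + 1)) * hinv -
    (-1) ^ k / 3 * (a (k + 4) : ℝ)⁻¹ * (a (k + 3) * h.triple_real.rec_a k - a (k + 1) * r)

lemma nearInt_cube (h : MarkoffApprox ξ lam a b c) :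
    NearInt lam (fun k => a (k + 4) * ξ ^ 3 + a (k + 1) * ξ ^ 3) (-gold) := by
  refine ⟨fun k => 3 * (b (k + 2) * c (k + 3) - (-1) ^ k * c (k + 1)), ?_⟩
  convert (((h.mono (t := -gold) ((h.hasOrder_b 2).mul (h.hasOrder_quadErr 3))).add
    ((h.mono (t := -gold) ((h.hasOrder_a 2).mul (h.hasOrder_linErr 3))).const_mul (ξ ^ 2))).sub
    (h.mono (h.hasOrder_quadErr 1)).sign_mul).const_mul 3 using 2 with k
  have m := h.triple_real.minor_succ (k + 1)
  have r := h.triple_real.rec_a (k + 1)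
  simp only [quadErr, linErr, pow_succ _ k, add_assoc, Nat.reduceAdd] at m r ⊢
  push_cast
  linear_combination ξ ^ 3 * r + 3 * ξ ^ 2 * m

lemma nearInt_fourth (h : MarkoffApprox ξ lam a b c) :
    NearInt lam (fun k => a (k + 4) * ξ ^ 4 + a (k + 1) * ξ ^ 4 +
      6 * ((-1) ^ k * (a (k + 1) * ξ ^ 3))) (-gold) := by
  refine ⟨fun k => 3 * c (k + 2) * c (k + 3) - 9 * c (k + 1), ?_⟩
  convert (h.hasOrder_mul_succ.const_mul 3).sub ((h.mono (h.hasOrder_quadErr 1)).const_mul 9)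
    using 2 with k
  have r := h.triple_real.rec_a (k + 1)
  simp only [quadErr, add_assoc, Nat.reduceAdd] at r ⊢
  push_cast
  linear_combination ξ ^ 4 * r

lemma nearInt_fifth_sub (h : MarkoffApprox ξ lam a b c) :
    NearInt lam (fun k => a (k + 7) * ξ ^ 5 - a (k + 1) * ξ ^ 5 -
      3 * ((-1) ^ k * (a (k + 4) * ξ ^ 4 + a (k + 1) * ξ ^ 4)) + 18 * (a (k + 4) * ξ ^ 3))
      (-gold) := by
  refine ⟨fun k => 9 * b (k + 4) * (c (k + 5) ^ 2 - c (k + 3) ^ 2) +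
    9 * (-1) ^ k * (3 * c (k + 4) - c (k + 3) * c (k + 5)), ?_⟩
  have hsq := h.mono (t := -gold) ((h.hasOrder_b 4).mul
    ((h.mono (t := -2 * gold ^ 3) (h.hasOrder_sq.shift 5)).sub (h.mono (h.hasOrder_sq.shift 3))))
  have hlin := (h.mono (t := -gold) (h.hasOrder_linErr_mul_sq_succ.shift 3)).sub
    h.hasOrder_linErr_mul_sq_pred
  have hsign := (((h.mono (t := -gold) (h.hasOrder_quadErr 4)).const_mul 3).sub
    (h.mono (h.hasOrder_mul_add_two.shift 2))).sign_mul
  convert ((hsq.add (hlin.const_mul (ξ ^ 4))).add hsign).const_mul 9 using 2 with k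
  have r1 := h.triple_real.rec_a (k + 1)
  have r2 := h.triple_real.rec_a (k + 2)
  have r3 := h.triple_real.rec_a (k + 3)
  have r4 := h.triple_real.rec_a (k + 4)
  simp only [linErr, quadErr, pow_add _ k, add_assoc, Nat.reduceAdd] at r1 r2 r3 r4 ⊢
  push_cast
  linear_combination ξ ^ 5 * (r4 + 3 * a (k + 5) * r3 - 3 * a (k + 3) * r2 - r1) -
    18 * ξ ^ 3 * a (k + 4) * neg_one_pow_sq (R := ℝ) k

lemma nearInt_fifth (h : MarkoffApprox ξ lam a b c) :
    NearInt lam (fun k => a (k + 7) * ξ ^ 5 - a (k + 1) * ξ ^ 5) (-gold) := by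
  convert (h.nearInt_fifth_sub.add (h.nearInt_fourth.sign_mul.intCast_mul 3)).add
    (h.nearInt_cube.intCast_mul (-18)) using 2 with k
  push_cast
  linear_combination -18 * a (k + 1) * ξ ^ 3 * neg_one_pow_sq (R := ℝ) k

lemma nearInt_add_six (h : MarkoffApprox ξ lam a b c) {i : ℕ} (hi : i ∈ Finset.Icc 3 5) :
    NearInt lam (fun k => a (k + 7) * ξ ^ i - a (k + 1) * ξ ^ i) (-gold) := by
  have hshift : gold ^ 3 * -gold ≤ -gold := by linarith [gold_pow_four, gold_pos]
  have hcube := (h.nearInt_cube.shift 3).mono h.lam_pos hshift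
  have hfourth := (h.nearInt_fourth.shift 3).mono h.lam_pos hshift
  fin_cases hi
  · convert hcube.add (h.nearInt_cube.intCast_mul (-1)) using 2 with k
    push_cast
    ring
  · convert (hfourth.add (h.nearInt_fourth.intCast_mul (-1))).add
      (h.nearInt_cube.sign_mul.intCast_mul 6) using 2 with k
    simp only [pow_add _ k]
    push_cast
    ring
  · exact h.nearInt_fifth

end MarkoffApprox

lemma scale_add_rpow_le {lam s : ℝ} (hlam : 0 < lam) (hs : s ≤ 0) (k p : ℕ) :
    scale lam (k + p) ^ s ≤ scale lam 0 ^ (s * (gold ^ p - 1)) * scale lam k ^ s := by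
  have hexp : s * (gold ^ p - 1) ≤ 0 := mul_nonpos_of_nonpos_of_nonneg hs <|
    sub_nonneg.2 (one_le_pow₀ (by linarith [lt_gold]))
  calc scale lam (k + p) ^ s
      = scale lam k ^ (s * (gold ^ p - 1)) * scale lam k ^ s := by
        rw [scale_add_rpow, ← Real.rpow_add (scale_pos lam k)]
        ring_nf
    _ ≤ _ := mul_le_mul_of_nonneg_right (Real.rpow_le_rpow_of_nonpos (scale_pos lam 0)
        ((scale_strictMono hlam).monotone k.zero_le) hexp) (Real.rpow_nonneg (scale_pos lam k).le s)

lemma abs_pow_mul_le_scale_rpow {lam A K s x δ : ℝ} {k n t : ℕ} (hlam : 0 < lam) (hA : 0 ≤ A)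
    (hK : 0 ≤ K) (hs : n - gold ^ t ≤ s) (hx : |x| ≤ A * scale lam (k + 1))
    (hδ : |δ| ≤ K * scale lam (k + t) ^ (-gold)) :
    |x ^ n * δ| ≤ A ^ n * K * scale lam (k + 1) ^ s := by
  have hS := scale_pos lam (k + 1)
  have hshift : scale lam (k + t) ^ (-gold) = scale lam (k + 1) ^ (-gold ^ t) := by
    rw [scale_add_rpow, scale_add_rpow, pow_one, mul_neg, mul_neg, mul_comm]
  calc |x ^ n * δ| ≤ (A * scale lam (k + 1)) ^ n * (K * scale lam (k + t) ^ (-gold)) := by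
        rw [abs_mul, abs_pow]
        gcongr
    _ = A ^ n * K * scale lam (k + 1) ^ (n - gold ^ t) := by
        rw [hshift, sub_eq_add_neg, Real.rpow_add hS, Real.rpow_natCast]
        ring
    _ ≤ A ^ n * K * scale lam (k + 1) ^ s := by
        gcongr
        exact one_le_scale hlam _

lemma NearInt.iterate {lam s : ℝ} {G : ℕ → ℝ} {p : ℕ} {r : ℤ} (hlam : 0 < lam) (hs : s < 0)
    (hp : p ≠ 0) (hr : |r| = 1) (hG : NearInt lam (fun k => G (k + p) - r * G k) s) :
    ∃ C, 0 < C ∧ ∀ m k, ∃ n : ℤ, |G (k + p * m) - (r ^ m * G k + n)| ≤ C * scale lam k ^ s := by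
  obtain ⟨n, hn⟩ := hG
  obtain ⟨K, hK, hn⟩ := hn.exists_bound
  set q := scale lam 0 ^ (s * (gold ^ p - 1))
  have hq1 : q < 1 := Real.rpow_lt_one_of_one_lt_of_neg
    (Real.one_lt_exp_iff.2 (by simpa using hlam))
    (mul_neg_of_neg_of_pos hs (sub_pos.2 (one_lt_pow₀ (by linarith [lt_gold]) hp)))
  have hC : 0 < K / (1 - q) := div_pos hK (sub_pos.2 hq1)
  refine ⟨K / (1 - q), hC, fun m => ?_⟩
  induction m with
  | zero =>
    exact fun k => ⟨0, by
      simpa using mul_nonneg hC.le (Real.rpow_nonneg (scale_pos ..).le s)⟩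
  | succ m ih =>
    intro k
    obtain ⟨n', hn'⟩ := ih (k + p)
    refine ⟨n' + r ^ m * n k, ?_⟩
    have hr' : |(r : ℝ) ^ m| = 1 := by rw [abs_pow, ← Int.cast_abs, hr, Int.cast_one, one_pow]
    have heq : G (k + p * (m + 1)) - (r ^ (m + 1) * G k + ((n' + r ^ m * n k : ℤ) : ℝ)) =
        G (k + p + p * m) - (r ^ m * G (k + p) + n') + r ^ m * (G (k + p) - r * G k - n k) := by
      push_cast
      ring_nf
    calc _ ≤ K / (1 - q) * scale lam (k + p) ^ s + K * scale lam k ^ s := by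
          rw [heq]
          refine (abs_add_le _ _).trans (add_le_add hn' ?_)
          rw [abs_mul, hr', one_mul]
          exact hn k
      _ ≤ K / (1 - q) * (q * scale lam k ^ s) + K * scale lam k ^ s := by
          gcongr
          exact scale_add_rpow_le hlam hs.le k p
      _ = K / (1 - q) * scale lam k ^ s := by
          have : 1 - q ≠ 0 := (sub_pos.2 hq1).ne'
          field_simp
          ring

/-! ### Rational approximation of `a T * ξ ^ i` -/

lemma HasOrder.sum {lam s : ℝ} {ι : Type*} {I : Finset ι} {f : ι → ℕ → ℝ}
    (hf : ∀ i ∈ I, HasOrder lam (f i) s) : HasOrder lam (fun k => ∑ i ∈ I, f i k) s :=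
  Asymptotics.IsBigO.fun_sum hf

namespace MarkoffApprox

variable {ξ lam : ℝ} {a b c : ℕ → ℤ}

lemma hasOrder_binomialNear (h : MarkoffApprox ξ lam a b c) {f : ℕ → ℝ} {t : ℕ → ℕ → ℤ} {s : ℝ}
    {n : ℕ} (ht : ∀ j ≤ n,
      HasOrder lam (fun k => linErr ξ a b (k + 1) ^ j * f k - t j k) (gold * (j - s))) :
    HasOrder lam (fun k => (a (k + 1) * ξ) ^ n * f k - binomialNear b t n k)
      (gold * (n - s)) := by
  have hterm : ∀ j ∈ Finset.range (n + 1), HasOrder lam (fun k => (n.choose j : ℝ) *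
      (b (k + 1) ^ (n - j) * (linErr ξ a b (k + 1) ^ j * f k - t j k))) (gold * (n - s)) := by
    intro j hj
    have hjn : j ≤ n := Finset.mem_range_succ_iff.1 hj
    refine HasOrder.const_mul ((((h.hasOrder_b 1).pow (n - j)).mul (ht j hjn)).mono h.lam_pos ?_) _
    rw [Nat.cast_sub hjn]
    linarith
  convert HasOrder.sum hterm using 2 with k
  rw [show a (k + 1) * ξ = linErr ξ a b (k + 1) + b (k + 1) by simp [linErr], add_pow,
    Finset.sum_mul, binomialNear, Int.cast_sum, ← Finset.sum_sub_distrib]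
  refine Finset.sum_congr rfl fun j _ => ?_
  push_cast
  ring

lemma hasOrder_tailTwo (h : MarkoffApprox ξ lam a b c) {j : ℕ} (hj : j ≤ 1) :
    HasOrder lam (fun k => linErr ξ a b (k + 1) ^ j * (a (k + 3) * ξ ^ 2) - tailTwo c j k)
      (gold * (j - (1 + gold))) := by
  interval_cases j
  · convert h.mono (t := gold * (((0 : ℕ) : ℝ) - (1 + gold))) (h.hasOrder_quadErr 3) using 2 with k
    simp only [tailTwo, quadErr]
    ring
  · convert (HasOrder.const_mul (h.mono (t := gold * (((1 : ℕ) : ℝ) - (1 + gold)))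
      ((h.hasOrder_a 1).mul (h.hasOrder_linErr 3))) (ξ ^ 2)).add
      (h.mono (h.hasOrder_quadErr 2).sign_mul) using 2 with k
    have m := h.linErr_add_two (k + 1)
    simp only [tailTwo, quadErr, pow_succ _ k, add_assoc, Nat.reduceAdd] at m ⊢
    push_cast
    linear_combination ξ ^ 2 * m

lemma hasOrder_tailFour_zero (h : MarkoffApprox ξ lam a b c) :
    HasOrder lam (fun k => a (k + 5) * ξ ^ 2 - tailFour a b c 0 k) (-1 - 3 * gold) :=
  h.mono (h.hasOrder_quadErr 5)

lemma linErr_add_three (h : MarkoffApprox ξ lam a b c) (k : ℕ) :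
    a (k + 4) * linErr ξ a b (k + 1) - a (k + 1) * linErr ξ a b (k + 4) =
      3 * (-1) ^ k * a (k + 2) ^ 2 := by
  simp only [linErr]
  linear_combination h.triple_real.minor_add_three k

lemma linErr_add_four (h : MarkoffApprox ξ lam a b c) (k : ℕ) :
    a (k + 5) * linErr ξ a b (k + 1) - a (k + 1) * linErr ξ a b (k + 5) =
      (-1) ^ k * (3 * a (k + 2) * a (k + 4) + a (k + 3)) := by
  simp only [linErr]
  linear_combination h.triple_real.minor_add_four k

lemma hasOrder_tailFour_one (h : MarkoffApprox ξ lam a b c) :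
    HasOrder lam (fun k => linErr ξ a b (k + 1) * (a (k + 5) * ξ ^ 2) - tailFour a b c 1 k)
      (-1 - 2 * gold) := by
  have hquad := ((h.mono (t := -1 - 2 * gold)
    ((h.hasOrder_a 2).mul (h.hasOrder_quadErr 4))).const_mul 3).add (h.mono (h.hasOrder_quadErr 3))
  convert ((h.mono (t := -1 - 2 * gold) ((h.hasOrder_a 1).mul (h.hasOrder_linErr 5))).const_mul
    (ξ ^ 2)).add hquad.sign_mul using 2 with k
  have m := h.linErr_add_four k
  simp only [tailFour, quadErr] at m ⊢
  push_cast
  linear_combination ξ ^ 2 * m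

lemma hasOrder_sq_mul_quadErr (h : MarkoffApprox ξ lam a b c) :
    HasOrder lam (fun k => 9 * a k ^ 2 * quadErr ξ a c k + 6 * (-1) ^ k * b k + 9 * a k) (-1) := by
  convert (((h.mono (t := -1) ((h.hasOrder_a 0).mul (h.hasOrder_prodErr 0))).const_mul (18 * ξ)).sub
    ((h.mono (t := -1) (h.hasOrder_linErr 0)).sign_mul.const_mul 6)).sub
    ((h.mono (t := -1) ((h.hasOrder_a 0).mul ((h.hasOrder_linErr 0).pow 2))).const_mul 9)
    using 2 with k
  have m := h.a_mul_quadErr k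
  simp only [add_zero, prodErr]
  simp only [linErr] at m ⊢
  linear_combination 9 * a k * m

/-- The part of `linErr ξ a b (k + 1) ^ 2 * a (k + 5)` that tends to `0`. -/
def sqRemainder (ξ : ℝ) (a b : ℕ → ℤ) (k : ℕ) : ℝ :=
  a (k + 1) * linErr ξ a b (k + 1) * linErr ξ a b (k + 5) +
    (-1) ^ k * (3 * a (k + 2) * a (k + 1) * linErr ξ a b (k + 4) +
      a (k + 1) * linErr ξ a b (k + 3))

lemma linErr_sq_mul (h : MarkoffApprox ξ lam a b c) (k : ℕ) :
    linErr ξ a b (k + 1) ^ 2 * a (k + 5) =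
      sqRemainder ξ a b k + 9 * a (k + 2) ^ 3 + a (k + 2) := by
  have m := h.linErr_add_two (k + 1)
  simp only [sqRemainder, pow_succ _ k, add_assoc, Nat.reduceAdd] at m ⊢
  linear_combination linErr ξ a b (k + 1) * h.linErr_add_four k +
    (-1) ^ k * (3 * a (k + 2) * h.linErr_add_three k + m) +
    (9 * a (k + 2) ^ 3 + a (k + 2)) * neg_one_pow_sq (R := ℝ) k

lemma hasOrder_sqRemainder (h : MarkoffApprox ξ lam a b c) :
    HasOrder lam (sqRemainder ξ a b) (-1 - gold) := by
  have hsign := ((h.mono (t := -1 - gold)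
    (((h.hasOrder_a 2).mul (h.hasOrder_a 1)).mul (h.hasOrder_linErr 4))).const_mul 3).add
      (h.mono ((h.hasOrder_a 1).mul (h.hasOrder_linErr 3)))
  convert (h.mono (t := -1 - gold)
    (((h.hasOrder_a 1).mul (h.hasOrder_linErr 1)).mul (h.hasOrder_linErr 5))).add hsign.sign_mul
    using 2 with k
  simp only [sqRemainder]
  ring

lemma hasOrder_tailFour_two (h : MarkoffApprox ξ lam a b c) :
    HasOrder lam (fun k => linErr ξ a b (k + 1) ^ 2 * (a (k + 5) * ξ ^ 2) - tailFour a b c 2 k)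
      (-1 - gold) := by
  convert ((h.hasOrder_sqRemainder.const_mul (ξ ^ 2)).add
    (h.mono (t := -1 - gold) (h.hasOrder_sq_mul_quadErr.shift 2))).add
    (h.mono (h.hasOrder_quadErr 2)) using 2 with k
  have m := h.linErr_sq_mul k
  simp only [tailFour, quadErr, pow_add _ k] at m ⊢
  push_cast
  linear_combination ξ ^ 2 * m

lemma hasOrder_tailFour_three (h : MarkoffApprox ξ lam a b c) :
    HasOrder lam (fun k => linErr ξ a b (k + 1) ^ 3 * (a (k + 5) * ξ ^ 2) - tailFour a b c 3 k)
      (-1) := by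
  have hlin := (((h.mono (t := -1) ((h.hasOrder_linErr 1).mul h.hasOrder_sqRemainder)).add
    ((h.mono (t := -1)
      (((h.hasOrder_a 1).mul (h.hasOrder_a 2)).mul (h.hasOrder_prodErr 2))).const_mul 9)).add
      (h.mono ((h.hasOrder_a 1).mul (h.hasOrder_linErr 2)))).const_mul (ξ ^ 2)
  have hsign := (((h.mono (t := -1) ((h.hasOrder_a 0).mul (h.hasOrder_prodErr 2))).const_mul
    (18 * ξ)).sub ((h.mono (t := -1) ((h.hasOrder_a 0).mul ((h.hasOrder_linErr 2).pow 2))).const_mul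
      9)).sub (h.mono (h.hasOrder_quadErr 3)) |>.sign_mul
  convert (hlin.add hsign).sub ((h.mono (t := -1) (h.hasOrder_linErr 0)).const_mul 6) using 2 with k
  have m2 := h.linErr_sq_mul k
  have m := h.linErr_succ k
  have r := h.triple_real.rec_a k
  have hb (k : ℕ) : (b k : ℝ) = a k * ξ - linErr ξ a b k := by simp [linErr]
  simp only [tailFour, quadErr, prodErr, pow_add _ k, add_zero]
  push_cast
  rw [hb k, hb (k + 2)]
  linear_combination ξ ^ 2 * (linErr ξ a b (k + 1) * m2 + (9 * a (k + 2) ^ 2 + 1) * m +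
    (-1) ^ k * r) - 6 * ξ * a k * neg_one_pow_sq (R := ℝ) k

lemma hasOrder_tailFour (h : MarkoffApprox ξ lam a b c) {j : ℕ} (hj : j ≤ 3) :
    HasOrder lam (fun k => linErr ξ a b (k + 1) ^ j * (a (k + 5) * ξ ^ 2) - tailFour a b c j k)
      (gold * (j - (2 + gold))) := by
  interval_cases j
  · simpa only [pow_zero, one_mul] using h.mono h.hasOrder_tailFour_zero
  · simpa only [pow_one] using h.mono h.hasOrder_tailFour_one
  · exact h.mono h.hasOrder_tailFour_two
  · exact h.mono h.hasOrder_tailFour_three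

end MarkoffApprox

/-- `a k ^ n * (a T * ξ ^ (n + 2))` lies within `C * scale lam k ^ s` of an integer which is almost
coprime to `a k`. -/
def NearCoprime (ξ lam : ℝ) (a : ℕ → ℤ) (C s : ℝ) (n k T : ℕ) : Prop :=
  ∃ N : ℤ, Int.gcd (a k) N ∣ 8 ∧
    |(a k : ℝ) ^ n * (a T * ξ ^ (n + 2)) - N| ≤ C * scale lam k ^ s

lemma NearCoprime.mono {ξ lam C C' s : ℝ} {a : ℕ → ℤ} {n k T : ℕ}
    (h : NearCoprime ξ lam a C s n k T) (hC : C ≤ C') : NearCoprime ξ lam a C' s n k T := by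
  obtain ⟨N, hN8, hN⟩ := h
  exact ⟨N, hN8, hN.trans (mul_le_mul_of_nonneg_right hC (Real.rpow_nonneg (scale_pos ..).le s))⟩

/-- Among any `q + 1` consecutive indices `k` well below `T` there is one at which the numbers
`a T * ξ ^ i` with `3 ≤ i ≤ D + 2` are simultaneously close to rational numbers with denominator
dividing `a k ^ (i - 2)`, in lowest terms up to a factor `8`. -/
def HasNearWindows (ξ lam : ℝ) (a : ℕ → ℤ) (D q : ℕ) (σ : ℝ) : Prop :=
  ∃ C, 0 < C ∧ ∀ j T, j + q + 2 ≤ T → ∃ k ∈ Finset.Icc (j + 1) (j + 1 + q),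
    ∀ n ∈ Finset.Icc 1 D, NearCoprime ξ lam a C (n - σ) n k T

lemma gcd_pow_mul_add_pow_mul_dvd {A N r z : ℤ} {n : ℕ} (hn : n ≠ 0) (hr : |r| = 1) (m : ℕ) :
    Int.gcd A (r ^ m * N + A ^ n * z) ∣ Int.gcd A N := by
  have hA := Int.gcd_dvd_left A (r ^ m * N + A ^ n * z)
  have hN := Int.gcd_dvd_right A (r ^ m * N + A ^ n * z)
  have hunit : IsUnit (r ^ m) := (Int.isUnit_iff_abs_eq.2 hr).pow m
  refine Int.natCast_dvd_natCast.1 (Int.dvd_coe_gcd hA (hunit.dvd_mul_left.1 ?_))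
  exact (dvd_add_left ((hA.trans (dvd_pow_self A hn)).mul_right z)).1 hN

namespace MarkoffApprox

variable {ξ lam : ℝ} {a b c : ℕ → ℤ}

lemma exists_nearCoprime (h : MarkoffApprox ξ lam a b c) {n t p : ℕ} {r : ℤ} {s : ℝ} {N : ℕ → ℤ}
    (hn : n ≠ 0) (hp : p ≠ 0) (hr : |r| = 1) (hs : n - gold ^ t ≤ s)
    (hN : HasOrder lam (fun k => (a (k + 1) * ξ) ^ n * (a (k + 1 + t) * ξ ^ 2) - N k) (gold * s))
    (hgcd : ∀ k, Int.gcd (a (k + 1)) (N k) ∣ 8)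
    (hper : NearInt lam (fun k => a (k + p + 1) * ξ ^ (n + 2) - r * (a (k + 1) * ξ ^ (n + 2)))
      (-gold)) :
    ∃ C, 0 < C ∧ ∀ k m, NearCoprime ξ lam a C s n (k + 1) (k + 1 + t + p * m) := by
  obtain ⟨A, hA, ha⟩ := h.hasOrder_a_zero.exists_bound
  obtain ⟨B, hB, hN⟩ := hN.exists_bound
  obtain ⟨K, hK, hiter⟩ :=
    hper.iterate (G := fun k => a (k + 1) * ξ ^ (n + 2)) h.lam_pos (neg_neg_of_pos gold_pos) hp hr
  refine ⟨B + A ^ n * K, by positivity, fun k m => ?_⟩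
  obtain ⟨z, hz⟩ := hiter m (k + t)
  refine ⟨r ^ m * N k + a (k + 1) ^ n * z, (gcd_pow_mul_add_pow_mul_dvd hn hr m).trans (hgcd k), ?_⟩
  have hbase : |(a (k + 1) * ξ) ^ n * (a (k + 1 + t) * ξ ^ 2) - N k| ≤
      B * scale lam (k + 1) ^ s := by
    rw [scale_add_rpow, pow_one]
    exact hN k
  have hstep : |(a (k + 1) : ℝ) ^ n * (a (k + t + p * m + 1) * ξ ^ (n + 2) -
      (r ^ m * (a (k + t + 1) * ξ ^ (n + 2)) + z))| ≤ A ^ n * K * scale lam (k + 1) ^ s := by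
    refine abs_pow_mul_le_scale_rpow h.lam_pos hA.le hK.le hs ?_ hz
    simpa only [Real.rpow_one] using ha (k + 1)
  have hr' : |(r : ℝ) ^ m| = 1 := by rw [abs_pow, ← Int.cast_abs, hr, Int.cast_one, one_pow]
  have heq : (a (k + 1) : ℝ) ^ n * (a (k + 1 + t + p * m) * ξ ^ (n + 2)) -
      (r ^ m * N k + a (k + 1) ^ n * z : ℤ) =
      r ^ m * ((a (k + 1) * ξ) ^ n * (a (k + 1 + t) * ξ ^ 2) - N k) + a (k + 1) ^ n *
        (a (k + t + p * m + 1) * ξ ^ (n + 2) - (r ^ m * (a (k + t + 1) * ξ ^ (n + 2)) + z)) := by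
    rw [show k + 1 + t + p * m = k + t + p * m + 1 by ring, add_right_comm k 1 t]
    push_cast
    ring
  rw [heq, add_mul]
  refine (abs_add_le _ _).trans (add_le_add ?_ hstep)
  rwa [abs_mul, hr', one_mul]

lemma exists_nearCoprime_tailTwo (h : MarkoffApprox ξ lam a b c) :
    ∃ C, 0 < C ∧ ∀ k m,
      NearCoprime ξ lam a C ((1 : ℕ) - (1 + gold)) 1 (k + 1) (k + 1 + 2 + 3 * m) := by
  refine h.exists_nearCoprime (r := -1) one_ne_zero three_ne_zero rfl ?_
    (h.hasOrder_binomialNear fun j hj => h.hasOrder_tailTwo hj)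
    h.triple.gcd_binomialNear_tailTwo_dvd ?_
  · push_cast
    linarith [gold_sq]
  · simpa using h.nearInt_cube

lemma exists_nearCoprime_tailFour (h : MarkoffApprox ξ lam a b c) {n p : ℕ} {r : ℤ}
    (hn : n ∈ Finset.Icc 1 3) (hp : p ≠ 0) (hr : |r| = 1)
    (hper : NearInt lam (fun k => a (k + p + 1) * ξ ^ (n + 2) - r * (a (k + 1) * ξ ^ (n + 2)))
      (-gold)) {σ : ℝ} (hσ : σ ≤ 2 + gold) :
    ∃ C, 0 < C ∧ ∀ k m, NearCoprime ξ lam a C (n - σ) n (k + 1) (k + 1 + 4 + p * m) := by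
  obtain ⟨hn1, hn3⟩ := Finset.mem_Icc.1 hn
  refine h.exists_nearCoprime (by lia) hp hr ?_ (HasOrder.mono
    (h.hasOrder_binomialNear fun j hj => h.hasOrder_tailFour (hj.trans hn3)) h.lam_pos ?_)
    (h.triple.gcd_binomialNear_tailFour_dvd hn) hper
  · linarith [gold_pow_four, gold_pos]
  · exact mul_le_mul_of_nonneg_left (by linarith) gold_pos.le

lemma hasNearWindows_one (h : MarkoffApprox ξ lam a b c) :
    HasNearWindows ξ lam a 1 1 (1 + gold) := by
  obtain ⟨C, hC, h2⟩ := h.exists_nearCoprime_tailTwo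
  obtain ⟨C', hC', h4⟩ := h.exists_nearCoprime_tailFour (n := 1) (r := -1) (by simp)
    three_ne_zero rfl (by simpa using h.nearInt_cube) (σ := 1 + gold) (by linarith)
  refine ⟨C + C', add_pos hC hC', fun j T hT => ?_⟩
  simp only [Finset.Icc_self, Finset.mem_singleton, forall_eq]
  obtain h0 | h1 | h2' : (T - (j + 1)) % 3 = 0 ∨ (T - (j + 1)) % 3 = 1 ∨ (T - (j + 1)) % 3 = 2 := by
    lia
  · obtain ⟨m, rfl⟩ : ∃ m, T = j + 1 + 1 + 2 + 3 * m := ⟨(T - (j + 4)) / 3, by lia⟩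
    exact ⟨j + 2, by simp, (h2 _ m).mono (by linarith)⟩
  · obtain ⟨m, rfl⟩ : ∃ m, T = j + 1 + 4 + 3 * m := ⟨(T - (j + 5)) / 3, by lia⟩
    exact ⟨j + 1, by simp, (h4 _ m).mono (by linarith)⟩
  · obtain ⟨m, rfl⟩ : ∃ m, T = j + 1 + 2 + 3 * m := ⟨(T - (j + 3)) / 3, by lia⟩
    exact ⟨j + 1, by simp, (h2 _ m).mono (by linarith)⟩

lemma hasNearWindows_of_le_three (h : MarkoffApprox ξ lam a b c) {D : ℕ} (hD : D ≤ 3) :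
    HasNearWindows ξ lam a D 5 (2 + gold) := by
  have hsub : ∀ n ∈ Finset.Icc 1 D, n ∈ Finset.Icc 1 3 :=
    fun n hn => Finset.Icc_subset_Icc_right hD hn
  choose! C hC hnear using fun n (hn : n ∈ Finset.Icc 1 D) =>
    h.exists_nearCoprime_tailFour (hsub n hn) (p := 6) (r := 1) (by simp) rfl
      (by simpa using h.nearInt_add_six (i := n + 2) (by simpa [and_comm] using hsub n hn))
      (σ := 2 + gold) le_rfl
  refine ⟨1 + ∑ n ∈ Finset.Icc 1 D, C n, by
    linarith [Finset.sum_nonneg fun n hn => (hC n hn).le], fun j T hT => ?_⟩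
  obtain ⟨e, m, he, rfl⟩ : ∃ e m, e ≤ 5 ∧ T = j + e + 1 + 4 + 6 * m :=
    ⟨(T - (j + 5)) % 6, (T - (j + 5)) / 6, by lia, by lia⟩
  refine ⟨j + e + 1, by simp; lia, fun n hn => (hnear n hn (j + e) m).mono ?_⟩
  linarith [Finset.single_le_sum (fun i hi => (hC i hi).le) hn]

end MarkoffApprox

/-! ### Distance to the integers -/

lemma sum_mul_pow_mul_sub_ne_zero {A : ℤ} {D : ℕ} {r N : ℕ → ℤ} (hD : 1 ≤ D)
    (hgcd : Int.gcd A (N D) ∣ 8) (hr : r D ≠ 0) (hrA : 8 * |r D| < |A|) (M : ℤ) :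
    ∑ n ∈ Finset.Icc 1 D, r n * A ^ (D - n) * N n - A ^ D * M ≠ 0 := by
  intro h0
  have htop : ∑ n ∈ Finset.Icc 1 D, r n * A ^ (D - n) * N n =
      ∑ n ∈ Finset.Ico 1 D, r n * A ^ (D - n) * N n + r D * N D := by
    rw [← Finset.Ico_insert_right hD, Finset.sum_insert Finset.right_notMem_Ico, add_comm]
    simp
  have hlow : A ∣ ∑ n ∈ Finset.Ico 1 D, r n * A ^ (D - n) * N n := Finset.dvd_sum fun n hn =>
    ((dvd_pow_self A (Nat.sub_ne_zero_of_lt (Finset.mem_Ico.1 hn).2)).mul_left _).mul_right _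
  have hlead : A ∣ r D * N D := by
    rw [htop, sub_eq_zero] at h0
    exact (dvd_add_right hlow).1 (h0 ▸ (dvd_pow_self A (by lia)).mul_right M)
  have h8 : A ∣ r D * 8 := (dvd_mul_gcd_of_dvd_mul hlead).trans
    (mul_dvd_mul_left _ (by rw [← Int.coe_gcd]; exact_mod_cast hgcd))
  have hzero := Int.eq_zero_of_abs_lt_dvd ((abs_dvd A _).2 h8)
    (by rwa [abs_mul, mul_comm])
  exact hr (by simpa using hzero)

lemma one_div_le_abs_sum_sub {A : ℤ} {D : ℕ} {f : ℕ → ℝ} {r N : ℕ → ℤ} (hD : 1 ≤ D)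
    (hgcd : Int.gcd A (N D) ∣ 8) (hr : r D ≠ 0) (hrA : 8 * |r D| < |A|)
    (hN : ∑ n ∈ Finset.Icc 1 D, |(r n : ℝ)| * |(A : ℝ)| ^ (D - n) * |A ^ n * f n - N n| ≤ 1 / 2)
    (M : ℤ) : 1 / (2 * |(A : ℝ)| ^ D) ≤ |∑ n ∈ Finset.Icc 1 D, r n * f n - M| := by
  set Z : ℤ := ∑ n ∈ Finset.Icc 1 D, r n * A ^ (D - n) * N n - A ^ D * M with hZ
  have hone : (1 : ℝ) ≤ |(Z : ℝ)| :=
    mod_cast Int.one_le_abs (sum_mul_pow_mul_sub_ne_zero hD hgcd hr hrA M)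
  have hdiff : |(Z : ℝ) - A ^ D * (∑ n ∈ Finset.Icc 1 D, r n * f n - M)| ≤ 1 / 2 := by
    have heq : (Z : ℝ) - A ^ D * (∑ n ∈ Finset.Icc 1 D, r n * f n - M) =
        -∑ n ∈ Finset.Icc 1 D, r n * A ^ (D - n) * (A ^ n * f n - N n) := by
      rw [hZ]
      push_cast
      rw [mul_sub, Finset.mul_sum, sub_sub_sub_cancel_right, ← Finset.sum_sub_distrib,
        ← Finset.sum_neg_distrib]
      refine Finset.sum_congr rfl fun n hn => ?_
      rw [← Nat.sub_add_cancel (Finset.mem_Icc.1 hn).2, pow_add, Nat.add_sub_cancel]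
      ring
    rw [heq, abs_neg]
    refine (Finset.abs_sum_le_sum_abs _ _).trans (le_trans (le_of_eq ?_) hN)
    simp only [abs_mul, abs_pow]
  have hA : 0 < |(A : ℝ)| := by
    exact_mod_cast (mul_nonneg (by norm_num) (abs_nonneg (r D))).trans_lt hrA
  have htri := abs_sub_abs_le_abs_sub (Z : ℝ) (A ^ D * (∑ n ∈ Finset.Icc 1 D, r n * f n - M))
  rw [abs_mul, abs_pow] at htri
  rw [div_le_iff₀ (by positivity)]
  linarith

lemma sum_mul_abs_sub_le {A C S H σ α : ℝ} {D : ℕ} {f : ℕ → ℝ} {r N : ℕ → ℤ} (hA : 1 ≤ A)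
    (hC : 0 ≤ C) (hS : 0 < S) (hα : |α| ≤ A * S) (hr : ∀ n, |(r n : ℝ)| ≤ H)
    (hN : ∀ n ∈ Finset.Icc 1 D, |α ^ n * f n - N n| ≤ C * S ^ (n - σ)) :
    ∑ n ∈ Finset.Icc 1 D, |(r n : ℝ)| * |α| ^ (D - n) * |α ^ n * f n - N n| ≤
      D * (A ^ D * C) * (H * S ^ (D - σ)) := by
  have hH : 0 ≤ H := (abs_nonneg _).trans (hr 0)
  have hterm : ∀ n ∈ Finset.Icc 1 D, |(r n : ℝ)| * |α| ^ (D - n) * |α ^ n * f n - N n| ≤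
      A ^ D * C * (H * S ^ (D - σ)) := fun n hn => by
    calc _ ≤ H * (A * S) ^ (D - n) * (C * S ^ (n - σ)) := by
          gcongr
          exacts [hr n, hN n hn]
      _ = A ^ (D - n) * C * (H * S ^ (D - σ)) := by
          rw [mul_pow, show (D : ℝ) - σ = (D - n : ℕ) + (n - σ) by
            push_cast [(Finset.mem_Icc.1 hn).2]; ring, Real.rpow_add hS, Real.rpow_natCast]
          ring
      _ ≤ _ := by
          gcongr
          exact Nat.sub_le D n
  refine (Finset.sum_le_sum hterm).trans_eq ?_
  rw [Finset.sum_const, Nat.card_Icc, Nat.add_sub_cancel, nsmul_eq_mul]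
  ring

lemma exists_scale_mem_Icc {lam B : ℝ} (hlam : 0 < lam) {T₀ : ℕ}
    (hT₀ : scale lam T₀ ≤ B ^ gold) : ∃ T, T₀ ≤ T ∧ B ≤ scale lam T ∧ scale lam T ≤ B ^ gold := by
  have hex : ∃ n, B ≤ scale lam (T₀ + n) :=
    (((tendsto_scale hlam).comp (tendsto_add_atTop_nat T₀)).eventually_ge_atTop B).exists.imp
      fun n hn => by simpa [add_comm] using hn
  classical
  refine ⟨T₀ + Nat.find hex, Nat.le_add_right .., Nat.find_spec hex, ?_⟩
  rcases hn : Nat.find hex with _ | n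
  · exact hT₀
  · have hlt : scale lam (T₀ + n) < B :=
      not_le.1 (Nat.find_min hex (m := n) (by rw [hn]; exact n.lt_succ_self))
    rw [← add_assoc, scale_add, pow_one]
    exact Real.rpow_le_rpow (scale_pos ..).le hlt.le gold_pos.le

namespace MarkoffApprox

variable {ξ lam : ℝ} {a b c : ℕ → ℤ}

lemma exists_bounds_a (h : MarkoffApprox ξ lam a b c) :
    ∃ A, 1 ≤ A ∧ ∀ k, |(a k : ℝ)| ≤ A * scale lam k ∧ scale lam k ≤ A * |(a k : ℝ)| := by
  obtain ⟨A, hA, ha⟩ := h.hasOrder_a_zero.exists_bound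
  obtain ⟨B, hB, hinv⟩ := h.hasOrder_inv_zero.exists_bound
  refine ⟨A + B + 1, by linarith, fun k => ⟨?_, ?_⟩⟩
  · have hk := ha k
    rw [Real.rpow_one] at hk
    exact hk.trans (mul_le_mul_of_nonneg_right (by linarith) (scale_pos ..).le)
  · have hk := hinv k
    have hpos : 0 < |(a k : ℝ)| := abs_pos.2 (h.cast_a_ne_zero k)
    rw [Real.rpow_neg_one, abs_inv, ← div_eq_mul_inv, inv_le_comm₀ hpos
      (div_pos hB (scale_pos ..)), inv_div, div_le_iff₀ hB, mul_comm] at hk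
    exact hk.trans (mul_le_mul_of_nonneg_right (by linarith) hpos.le)

lemma exists_one_div_le_abs_sum_sub_of_nearCoprime (h : MarkoffApprox ξ lam a b c) {D : ℕ}
    (hD : 1 ≤ D) {C : ℝ} (hC : 0 < C) (σ : ℝ) :
    ∃ B, 1 ≤ B ∧ ∀ (k T : ℕ) (r : ℕ → ℤ) (H : ℝ), (∀ n, |(r n : ℝ)| ≤ H) → r D ≠ 0 →
      B * H ≤ scale lam k → B * H ≤ scale lam k ^ (σ - D) →
      (∀ n ∈ Finset.Icc 1 D, NearCoprime ξ lam a C (n - σ) n k T) → ∀ M : ℤ,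
      1 / (B * scale lam k ^ D) ≤ |∑ n ∈ Finset.Icc 1 D, r n * (a T * ξ ^ (n + 2)) - M| := by
  obtain ⟨A, hA, ha⟩ := h.exists_bounds_a
  have hAD : 0 ≤ D * (A ^ D * C) := by positivity
  have hApow : 1 ≤ A ^ D := one_le_pow₀ hA
  refine ⟨9 * A + 2 * A ^ D + 2 * (D * (A ^ D * C)), by linarith,
    fun k T r H hr hrD hH hHσ hnear M => ?_⟩
  set B := 9 * A + 2 * A ^ D + 2 * (D * (A ^ D * C))
  have hS := scale_pos lam k
  have hH1 : 1 ≤ H := le_trans (mod_cast Int.one_le_abs hrD) (hr D)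
  have hsize : 8 * |r D| < |a k| := by
    have h9 : A * (9 * H) ≤ A * |(a k : ℝ)| := by
      nlinarith [(ha k).2]
    have := le_of_mul_le_mul_left h9 (by linarith)
    exact_mod_cast (show 8 * |(r D : ℝ)| < |(a k : ℝ)| by linarith [hr D])
  have hHσ' : B * (H * scale lam k ^ (D - σ)) ≤ 1 := by
    rw [← neg_sub σ, Real.rpow_neg hS.le, ← mul_assoc, ← div_eq_mul_inv]
    exact div_le_one_of_le₀ hHσ (Real.rpow_nonneg hS.le _)
  choose! N hN8 hN using hnear
  have hsum : ∑ n ∈ Finset.Icc 1 D, |(r n : ℝ)| * |(a k : ℝ)| ^ (D - n) *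
      |(a k : ℝ) ^ n * (a T * ξ ^ (n + 2)) - N n| ≤ 1 / 2 := by
    refine (sum_mul_abs_sub_le hA hC.le hS (ha k).1 hr hN).trans ?_
    have hx : 0 ≤ H * scale lam k ^ (D - σ) := by positivity
    nlinarith
  have hdist := one_div_le_abs_sum_sub hD (hN8 D (Finset.mem_Icc.2 ⟨hD, le_rfl⟩)) hrD hsize hsum M
  refine le_trans (one_div_le_one_div_of_le ?_ ?_) hdist
  · have := abs_pos.2 (h.cast_a_ne_zero k)
    positivity
  · calc 2 * |(a k : ℝ)| ^ D ≤ 2 * (A * scale lam k) ^ D := by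
          gcongr
          exact (ha k).1
      _ = 2 * A ^ D * scale lam k ^ D := by ring
      _ ≤ B * scale lam k ^ D := by
          gcongr
          linarith

lemma exists_one_div_le_abs_sum_sub (h : MarkoffApprox ξ lam a b c) {D q : ℕ} {σ μ : ℝ} (hD : 1 ≤ D)
    (hwin : HasNearWindows ξ lam a D q σ) (hμ : 1 ≤ μ) (hσ : 1 ≤ μ * (σ - D)) :
    ∃ B, 1 ≤ B ∧ ∀ (j T : ℕ) (r : ℕ → ℤ) (H : ℝ), (∀ n, |(r n : ℝ)| ≤ H) → r D ≠ 0 →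
      (B * H) ^ μ ≤ scale lam (j + 1) → j + q + 2 ≤ T → ∀ M : ℤ,
      1 / (B * scale lam (j + 1 + q) ^ D) ≤
        |∑ n ∈ Finset.Icc 1 D, r n * (a T * ξ ^ (n + 2)) - M| := by
  obtain ⟨C, hC, hwin⟩ := hwin
  obtain ⟨B, hB, hdist⟩ := h.exists_one_div_le_abs_sum_sub_of_nearCoprime hD hC σ
  refine ⟨B, hB, fun j T r H hr hrD hj hT M => ?_⟩
  obtain ⟨k, hk, hnear⟩ := hwin j T hT
  obtain ⟨hjk, hkq⟩ := Finset.mem_Icc.1 hk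
  have hmono := (scale_strictMono h.lam_pos).monotone
  have hH : 1 ≤ B * H := one_le_mul_of_one_le_of_one_le hB <|
    le_trans (mod_cast Int.one_le_abs hrD) (hr D)
  have hHk : (B * H) ^ μ ≤ scale lam k := hj.trans (hmono hjk)
  refine le_trans ?_ (hdist k T r H hr hrD ?_ ?_ hnear M)
  · exact one_div_le_one_div_of_le (by have := scale_pos lam k; positivity) <|
      mul_le_mul_of_nonneg_left (pow_le_pow_left₀ (scale_pos ..).le (hmono hkq) D) (by linarith)
  · exact (Real.self_le_rpow_of_one_le hH hμ).trans hHk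
  · have hσ0 : 0 ≤ σ - D := by
      by_contra! hneg
      linarith [mul_neg_of_pos_of_neg (show 0 < μ by linarith) hneg]
    calc B * H ≤ (B * H) ^ (μ * (σ - D)) := Real.self_le_rpow_of_one_le hH hσ
      _ = ((B * H) ^ μ) ^ (σ - D) := Real.rpow_mul (by linarith) ..
      _ ≤ scale lam k ^ (σ - D) := Real.rpow_le_rpow (by positivity) hHk hσ0

lemma exists_one_le_mul_abs_add (h : MarkoffApprox ξ lam a b c) :
    ∃ B, 1 ≤ B ∧ ∀ (T : ℕ) (p₀ p₁ p₂ : ℤ) (N V Y : ℝ), |(p₁ : ℝ)| ≤ N → |(p₂ : ℝ)| ≤ N → 0 < Y →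
      (∀ M : ℤ, 1 / Y ≤ |a T * V - M|) → B * N * Y ≤ scale lam T →
      1 ≤ B * Y * scale lam T * |p₀ + p₁ * ξ + p₂ * ξ ^ 2 + V| := by
  obtain ⟨A, hA, ha⟩ := h.exists_bounds_a
  obtain ⟨K, hK, hlin⟩ := h.hasOrder_linErr_zero.exists_bound
  obtain ⟨L, hL, hquad⟩ := h.hasOrder_quadErr_zero.exists_bound
  refine ⟨2 * (A + K + L), by linarith, fun T p₀ p₁ p₂ N V Y h1 h2 hY hM hT => ?_⟩
  have hS := scale_pos lam T
  have hN : 0 ≤ N := (abs_nonneg _).trans h1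
  have hsplit : a T * V - (-(p₀ * a T + p₁ * b T + p₂ * c T) : ℤ) =
      a T * (p₀ + p₁ * ξ + p₂ * ξ ^ 2 + V) - (p₁ * linErr ξ a b T + p₂ * quadErr ξ a c T) := by
    simp only [linErr, quadErr]
    push_cast
    ring
  have herr : |p₁ * linErr ξ a b T + p₂ * quadErr ξ a c T| ≤ 1 / (2 * Y) := by
    calc _ ≤ |(p₁ : ℝ)| * |linErr ξ a b T| + |(p₂ : ℝ)| * |quadErr ξ a c T| := by
          simpa only [abs_mul] using abs_add_le (p₁ * linErr ξ a b T) (p₂ * quadErr ξ a c T)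
      _ ≤ N * (K * scale lam T ^ (-1 : ℝ)) + N * (L * scale lam T ^ (-1 : ℝ)) := by
          gcongr
          exacts [hlin T, hquad T]
      _ = (K + L) * N / scale lam T := by rw [Real.rpow_neg_one]; ring
      _ ≤ 1 / (2 * Y) := by
        rw [div_le_div_iff₀ hS (by positivity)]
        nlinarith [mul_nonneg hN hY.le]
  have hmain : |a T * (p₀ + p₁ * ξ + p₂ * ξ ^ 2 + V)| ≤
      A * scale lam T * |p₀ + p₁ * ξ + p₂ * ξ ^ 2 + V| := by
    rw [abs_mul]
    exact mul_le_mul_of_nonneg_right (ha T).1 (abs_nonneg _)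
  have hdist := hM (-(p₀ * a T + p₁ * b T + p₂ * c T))
  rw [hsplit] at hdist
  have htri := hdist.trans (abs_sub _ _)
  have hhalf : 1 / Y - 1 / (2 * Y) = 1 / (2 * Y) := by field_simp; norm_num
  have hfin : 1 / (2 * Y) ≤ A * scale lam T * |p₀ + p₁ * ξ + p₂ * ξ ^ 2 + V| := by linarith
  rw [div_le_iff₀ (by positivity)] at hfin
  have hrest : 0 ≤ (K + L) * (Y * scale lam T * |p₀ + p₁ * ξ + p₂ * ξ ^ 2 + V|) := by positivity
  linarith

end MarkoffApprox

lemma exists_scale_succ_mem_Icc {lam B : ℝ} (hlam : 0 < lam) (hB : scale lam 0 ≤ B) :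
    ∃ j, B ≤ scale lam (j + 1) ∧ scale lam (j + 1) ≤ B ^ gold := by
  obtain ⟨k, hk, hBk, hkB⟩ := exists_scale_mem_Icc (T₀ := 0 + 1) (B := B) hlam <| by
    rw [scale_add, pow_one]
    exact Real.rpow_le_rpow (scale_pos ..).le hB gold_pos.le
  obtain ⟨j, rfl⟩ := Nat.exists_eq_add_of_le' hk
  exact ⟨j, hBk, hkB⟩

lemma scale_add_le_pow_rpow {lam : ℝ} {D : ℕ} (hlam : 0 < lam) (hD : gold ^ D ≤ D * gold)
    (k : ℕ) : scale lam (k + D) ≤ (scale lam k ^ D) ^ gold := by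
  rw [scale_add, ← Real.rpow_natCast_mul (scale_pos ..).le]
  exact Real.rpow_le_rpow_of_exponent_le (one_le_scale hlam k) hD

lemma scale_mul_scale_add_pow_le {lam : ℝ} {D q : ℕ} (hlam : 0 < lam)
    (hq : 1 + D * gold ^ q ≤ gold ^ (q + D)) (k : ℕ) :
    scale lam k * scale lam (k + q) ^ D ≤ scale lam (k + q + D) := by
  have hS := scale_pos lam k
  calc scale lam k * scale lam (k + q) ^ D = scale lam k ^ (1 + D * gold ^ q) := by
        rw [scale_add, ← Real.rpow_mul_natCast hS.le, Real.rpow_add hS, Real.rpow_one,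
          mul_comm (D : ℝ)]
    _ ≤ scale lam k ^ gold ^ (q + D) :=
        Real.rpow_le_rpow_of_exponent_le (one_le_scale hlam k) hq
    _ = scale lam (k + q + D) := by rw [add_assoc, scale_add]

lemma mul_mul_rpow_gold {x Y : ℝ} (hx : 0 ≤ x) (hY : 0 < Y) :
    Y * (x * Y) ^ gold = x ^ gold * Y ^ gold ^ 2 := by
  rw [Real.mul_rpow hx hY.le, gold_sq, Real.rpow_add hY, Real.rpow_one]
  ring

lemma mul_scale_pow_rpow_le {lam B x ν : ℝ} {k : ℕ} (hB : 0 ≤ B) (hx : 0 ≤ x)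
    (h : scale lam k ≤ x ^ ν) (q D : ℕ) :
    (B * scale lam (k + q) ^ D) ^ gold ^ 2 ≤ B ^ gold ^ 2 * x ^ (ν * gold ^ (q + 2) * D) := by
  have hS := scale_pos lam k
  have hg := gold_pos
  have hpow : (scale lam (k + q) ^ D) ^ gold ^ 2 = scale lam k ^ (gold ^ (q + 2) * D) := by
    rw [scale_add, ← Real.rpow_mul_natCast hS.le, ← Real.rpow_mul hS.le]
    ring_nf
  rw [Real.mul_rpow hB (pow_nonneg (scale_pos ..).le D), hpow, mul_assoc, Real.rpow_mul hx]
  gcongr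

lemma exists_scale_ge_mul_add {lam B p H : ℝ} {D q k : ℕ} (hlam : 0 < lam) (hB : 1 ≤ B)
    (hDgold : gold ^ D ≤ D * gold) (hq : 1 + D * gold ^ q ≤ gold ^ (q + D)) (hp : 0 ≤ p)
    (hk : 2 * B ^ 2 * H ≤ scale lam k) :
    ∃ T, k + q + D ≤ T ∧ B * (p + H) * (B * scale lam (k + q) ^ D) ≤ scale lam T ∧
      scale lam T ≤ (2 * B * (1 + p) * (B * scale lam (k + q) ^ D)) ^ gold := by
  have hS := scale_pos lam (k + q)
  set Y := B * scale lam (k + q) ^ D with hY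
  have hSY : scale lam (k + q) ^ D ≤ 2 * B * (1 + p) * Y := by
    rw [hY, ← mul_assoc]
    exact le_mul_of_one_le_left (by positivity) (by nlinarith)
  obtain ⟨T, hT, hYT, hTY⟩ := exists_scale_mem_Icc hlam ((scale_add_le_pow_rpow hlam hDgold _).trans
    (Real.rpow_le_rpow (by positivity) hSY gold_pos.le))
  refine ⟨T, hT, ?_, hTY⟩
  have hHY : 2 * (B * H * Y) ≤ scale lam T :=
    calc 2 * (B * H * Y) = 2 * B ^ 2 * H * scale lam (k + q) ^ D := by rw [hY]; ring
      _ ≤ scale lam k * scale lam (k + q) ^ D := by gcongr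
      _ ≤ scale lam (k + q + D) := scale_mul_scale_add_pow_le hlam hq k
      _ ≤ scale lam T := (scale_strictMono hlam).monotone hT
  have hBY : 0 < B * Y := by positivity
  linarith

/-- The first index has to exceed `H` only, since it governs the coefficients of degree at least
three; the second one absorbs `p` and the denominator produced by the first. -/
lemma exists_scale_pair {lam B μ : ℝ} {D q : ℕ} (hlam : 0 < lam) (hB : 1 ≤ B) (hμ : 1 ≤ μ)
    (hD : 1 ≤ D) (hDgold : gold ^ D ≤ D * gold) (hq : 1 + D * gold ^ q ≤ gold ^ (q + D)) :
    ∃ K, 0 < K ∧ ∀ p H : ℝ, 0 ≤ p → 1 ≤ H → ∃ j T, j + q + 2 ≤ T ∧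
      (B * H) ^ μ ≤ scale lam (j + 1) ∧
      B * (p + H) * (B * scale lam (j + 1 + q) ^ D) ≤ scale lam T ∧
      B * scale lam (j + 1 + q) ^ D * scale lam T ≤
        K * ((1 + p) ^ gold * H ^ (D * μ * gold ^ (q + 3))) := by
  set E := 2 * B ^ 2 + scale lam 0
  have hE : B ≤ E ∧ 2 * B ^ 2 ≤ E ∧ scale lam 0 ≤ E := by
    have := scale_pos lam 0
    refine ⟨?_, ?_, ?_⟩ <;> nlinarith
  have hE1 : 1 ≤ E := hB.trans hE.1
  refine ⟨(2 * B) ^ gold * (B ^ gold ^ 2 * E ^ (D * μ * gold ^ (q + 3))), by positivity,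
    fun p H hp hH => ?_⟩
  have hEH : E ≤ E * H := le_mul_of_one_le_right (by positivity) hH
  have hEHμ : E * H ≤ (E * H) ^ μ := Real.self_le_rpow_of_one_le (hE1.trans hEH) hμ
  obtain ⟨j, hj, hjE⟩ := exists_scale_succ_mem_Icc hlam (hE.2.2.trans (hEH.trans hEHμ))
  obtain ⟨T, hT, hHT, hTle⟩ := exists_scale_ge_mul_add hlam hB hDgold hq hp
    (le_trans (by gcongr; exact hE.2.1) (hEHμ.trans hj))
  refine ⟨j, T, by lia, le_trans (by gcongr; exact hE.1) hj, hHT, ?_⟩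
  have hS := scale_pos lam (j + 1 + q)
  calc B * scale lam (j + 1 + q) ^ D * scale lam T
      ≤ B * scale lam (j + 1 + q) ^ D *
          (2 * B * (1 + p) * (B * scale lam (j + 1 + q) ^ D)) ^ gold := by gcongr
    _ = (2 * B) ^ gold * (1 + p) ^ gold * (B * scale lam (j + 1 + q) ^ D) ^ gold ^ 2 := by
      rw [mul_mul_rpow_gold (by positivity) (by positivity),
        Real.mul_rpow (by positivity) (by positivity)]
    _ ≤ (2 * B) ^ gold * (1 + p) ^ gold *
        (B ^ gold ^ 2 * (E * H) ^ (μ * gold * gold ^ (q + 2) * D)) := by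
      gcongr
      refine mul_scale_pow_rpow_le (by positivity) (by positivity) ?_ q D
      rwa [Real.rpow_mul (by positivity)]
    _ = _ := by
      rw [show μ * gold * gold ^ (q + 2) * D = D * μ * gold ^ (q + 3) by ring,
        Real.mul_rpow (x := E) (by positivity) (by positivity)]
      ring

lemma MarkoffApprox.exists_one_le_mul_abs {ξ lam μ σ : ℝ} {a b c : ℕ → ℤ} {D q : ℕ}
    (h : MarkoffApprox ξ lam a b c) (hwin : HasNearWindows ξ lam a D q σ) (hD : 1 ≤ D)
    (hμ : 1 ≤ μ) (hσ : 1 ≤ μ * (σ - D)) (hDgold : gold ^ D ≤ D * gold)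
    (hq : 1 + D * gold ^ q ≤ gold ^ (q + D)) :
    ∃ K, 0 < K ∧ ∀ (p₀ p₁ p₂ : ℤ) (r : ℕ → ℤ) (p H : ℝ), 0 ≤ p → 1 ≤ H → |(p₁ : ℝ)| ≤ p + H →
      |(p₂ : ℝ)| ≤ p + H → (∀ n, |(r n : ℝ)| ≤ H) → r D ≠ 0 →
      1 ≤ K * ((1 + p) ^ gold * H ^ (D * μ * gold ^ (q + 3))) *
        |p₀ + p₁ * ξ + p₂ * ξ ^ 2 + ∑ n ∈ Finset.Icc 1 D, r n * ξ ^ (n + 2)| := by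
  obtain ⟨B₁, hB₁, hdist⟩ := h.exists_one_div_le_abs_sum_sub hD hwin hμ hσ
  obtain ⟨B₂, hB₂, hlow⟩ := h.exists_one_le_mul_abs_add
  obtain ⟨K, hK, hpair⟩ :=
    exists_scale_pair (B := B₁ + B₂) h.lam_pos (by linarith) hμ hD hDgold hq
  refine ⟨B₂ * K, by positivity, fun p₀ p₁ p₂ r p H hp hH h1 h2 hr hrD => ?_⟩
  obtain ⟨j, T, hjT, hj, hT, hle⟩ := hpair p H hp hH
  have hS := scale_pos lam (j + 1 + q)
  set Y := (B₁ + B₂) * scale lam (j + 1 + q) ^ D with hY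
  have hYpos : 0 < Y := by positivity
  have hfar : ∀ M : ℤ, 1 / Y ≤ |a T * ∑ n ∈ Finset.Icc 1 D, r n * ξ ^ (n + 2) - M| := fun M => by
    have hM := hdist j T r H hr hrD (le_trans (by gcongr; linarith) hj) hjT M
    rw [show a T * ∑ n ∈ Finset.Icc 1 D, r n * ξ ^ (n + 2) =
      ∑ n ∈ Finset.Icc 1 D, r n * (a T * ξ ^ (n + 2)) by
        rw [Finset.mul_sum]; exact Finset.sum_congr rfl fun n _ => mul_left_comm ..]
    refine le_trans (one_div_le_one_div_of_le (by positivity) ?_) hM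
    rw [hY]
    gcongr
    linarith
  have hlow := hlow T p₀ p₁ p₂ (p + H) _ Y h1 h2 hYpos hfar (le_trans (by gcongr; linarith) hT)
  rw [mul_assoc B₂] at hlow
  rw [mul_assoc B₂]
  exact hlow.trans (by gcongr)

/-! ### Markoff sequences -/

lemma exists_scale_of_rpow_gold {X : ℕ → ℝ} {c₁ c₂ : ℝ} (hX : ∀ k, 0 < X k)
    (htop : Tendsto X atTop atTop) (hc₁ : 0 < c₁) (hc₂ : 0 < c₂)
    (hrec : ∀ k, c₁ * X k ^ gold ≤ X (k + 1) ∧ X (k + 1) ≤ c₂ * X k ^ gold) :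
    ∃ lam A, 0 < lam ∧ ∀ k, X k ≤ A * scale lam k ∧ scale lam k ≤ A * X k := by
  have hlog : ∀ k, |Real.log (X (k + 1)) - gold * Real.log (X k)| ≤
      max (Real.log c₂) (-Real.log c₁) := fun k => by
    have hpow := Real.rpow_pos_of_pos (hX k) gold
    have hlow := Real.log_le_log (by positivity) (hrec k).1
    have hupp := Real.log_le_log (hX _) (hrec k).2
    rw [Real.log_mul (by positivity) hpow.ne', Real.log_rpow (hX k)] at hlow hupp
    refine abs_le.2 ⟨?_, ?_⟩
    · linarith [le_max_right (Real.log c₂) (-Real.log c₁)]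
    · linarith [le_max_left (Real.log c₂) (-Real.log c₁)]
  obtain ⟨lam, hlam⟩ := exists_abs_sub_mul_pow_le (show 1 < gold by linarith [lt_gold])
    (u := fun k => Real.log (X k)) hlog
  set K := max (Real.log c₂) (-Real.log c₁) / (gold - 1)
  have hbound : ∀ k, X k ≤ Real.exp K * scale lam k ∧ scale lam k ≤ Real.exp K * X k := fun k => by
    have hk := abs_le.1 (hlam k)
    rw [scale, ← Real.exp_add, ← Real.log_le_iff_le_exp (hX k), ← Real.exp_log (hX k),
      ← Real.exp_add, Real.exp_le_exp, Real.log_exp]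
    exact ⟨by linarith, by linarith⟩
  refine ⟨lam, Real.exp K, ?_, hbound⟩
  by_contra! hneg
  obtain ⟨k, hk⟩ := (htop.eventually_gt_atTop (Real.exp K)).exists
  refine hk.not_ge ((hbound k).1.trans (mul_le_of_le_one_right (Real.exp_pos K).le ?_))
  exact Real.exp_le_one_iff.2 (mul_nonpos_of_nonpos_of_nonneg hneg (pow_pos gold_pos k).le)

section MarkoffSeq

variable {ξ : ℝ} {x : ℕ → Matrix (Fin 2) (Fin 2) ℤ}

lemma abs_le_Xnorm (x : ℕ → Matrix (Fin 2) (Fin 2) ℤ) (k : ℕ) : |(x k 0 0 : ℝ)| ≤ Xnorm x k :=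
  le_max_left ..

lemma exists_natCast_eq_Xnorm (x : ℕ → Matrix (Fin 2) (Fin 2) ℤ) (k : ℕ) :
    ∃ m : ℕ, (m : ℝ) = Xnorm x k :=
  ⟨max (x k 0 0).natAbs (max (x k 0 1).natAbs (x k 1 1).natAbs), by
    simp [Xnorm, Nat.cast_natAbs]⟩

lemma MarkoffSeq.markoffTriple (hx : MarkoffSeq ξ x) {m : ℕ} (hm : Even m) (hm1 : 1 ≤ m) :
    MarkoffTriple (fun k => x (m + k) 0 0) (fun k => x (m + k) 0 1) (fun k => x (m + k) 1 1) := by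
  obtain ⟨hsymm, hdet, _, _, _, _, _, _, hk⟩ := hx
  have hshift : ∀ k, 1 ≤ m + k := fun k => hm1.trans (Nat.le_add_right m k)
  have hentry : ∀ k, ∀ i j, x (m + (k + 2)) i j =
      (3 * x (m + (k + 1)) i 0 + (-1) ^ k * x (m + (k + 1)) i 1) * x (m + k) 0 j
        - (-1) ^ k * x (m + (k + 1)) i 0 * x (m + k) 1 j := fun k i j => by
    have hp : (-1 : ℤ) ^ (m + k) = (-1) ^ k := by rw [pow_add, hm.neg_one_pow, one_mul]
    have h := (hk _ (hshift k)).2.2.1.1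
    simp only [add_assoc] at h
    rw [h]
    simp only [Mmat, Matrix.mul_apply, Fin.sum_univ_two, ← add_assoc, pow_succ, hp,
      Matrix.of_apply, Matrix.cons_val_zero, Matrix.cons_val_one, Matrix.cons_val_fin_one]
    ring
  refine ⟨fun k => ?_, fun k => ?_, fun k => ?_, fun k => ?_, fun k => ?_⟩
  · have h := hdet _ (hshift k)
    rw [Matrix.det_fin_two, ← hsymm _ (hshift k)] at h
    linarith
  · rw [hentry, hsymm _ (hshift k)]
  · rw [hentry]
  · rw [hsymm _ (hshift (k + 2)), hentry, ← hsymm _ (hshift (k + 1)), ← hsymm _ (hshift k)]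
  · rw [hentry, ← hsymm _ (hshift (k + 1))]

lemma MarkoffSeq.tendsto_Xnorm (hx : MarkoffSeq ξ x) : Tendsto (Xnorm x) atTop atTop := by
  obtain ⟨-, -, _, _, _, _, _, _, hk⟩ := hx
  choose m hm using exists_natCast_eq_Xnorm x
  have hmono : StrictMono fun k => m (k + 1) := strictMono_nat_of_lt_succ fun k => by
    have hlt := (hk (k + 1) k.succ_pos).2.2.2.1
    rw [← hm, ← hm] at hlt
    exact_mod_cast hlt
  rw [← funext hm]
  exact tendsto_natCast_atTop_atTop.comp ((tendsto_add_atTop_iff_nat 1).1 hmono.tendsto_atTop)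

lemma MarkoffSeq.exists_markoffApprox (hx : MarkoffSeq ξ x) :
    ∃ (lam : ℝ) (a b c : ℕ → ℤ), MarkoffApprox ξ lam a b c := by
  have htop := (tendsto_add_atTop_iff_nat 2).2 hx.tendsto_Xnorm
  have htriple := hx.markoffTriple even_two one_le_two
  obtain ⟨-, -, c₁, c₂, c₃, hc₁, hc₂, hc₃, hk⟩ := hx
  have hk := fun k => hk (2 + k) (by lia)
  simp only [add_comm _ 2] at htop
  have ha := fun k => abs_le_Xnorm x (2 + k)
  have hane : ∀ k, x (2 + k) 0 0 ≠ 0 := fun k h0 => by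
    have hlt := (hk k).2.2.2.2
    have hle := ha k
    rw [h0, Int.cast_zero, abs_zero] at hlt hle
    linarith
  have hapos : ∀ k, 0 < |(x (2 + k) 0 0 : ℝ)| := fun k => abs_pos.2 (mod_cast hane k)
  have hpos := fun k => (hapos k).trans_le (ha k)
  obtain ⟨lam, A, hlam, hscale⟩ :=
    exists_scale_of_rpow_gold hpos htop hc₁ hc₂ fun k => (hk k).1
  have hscale' := fun k => (hscale k).2
  have herr := fun k => (hk k).2.1
  refine ⟨lam, _, _, _, htriple, hlam, hane, ?_, ?_, ?_, ?_⟩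
  · refine HasOrder.of_bound A fun k => (ha k).trans ?_
    rw [Real.rpow_one]
    exact (hscale k).1
  · refine HasOrder.of_le_div hpos hscale' (K := 1 + ξ ^ 2) (by positivity) fun k => ?_
    rw [abs_inv, inv_eq_one_div, div_le_div_iff₀ (hapos k) (hpos k), one_mul]
    exact (hk k).2.2.2.2.le
  · exact HasOrder.of_le_div hpos hscale' hc₃.le fun k => (herr k).1
  · refine HasOrder.of_le_div hpos hscale' (K := (|ξ| + 1) * c₃) (by positivity) fun k => ?_
    rw [show quadErr ξ _ _ k = ξ * (x (2 + k) 0 0 * ξ - x (2 + k) 0 1) +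
      (x (2 + k) 0 1 * ξ - x (2 + k) 1 1) by rw [quadErr]; ring]
    refine (abs_add_le _ _).trans ?_
    rw [abs_mul, mul_div_assoc, add_mul, one_mul]
    exact add_le_add (mul_le_mul_of_nonneg_left (herr k).1 (abs_nonneg ξ)) (herr k).2

end MarkoffSeq

/-! ### Polynomials of degree three to five -/

lemma abs_coeff_le_polyNorm (P : ℤ[X]) (i : ℕ) : |(P.coeff i : ℝ)| ≤ polyNorm P := by
  by_cases hi : i ∈ P.support
  · have h : (P.coeff i).natAbs ≤ polyNorm P :=
      Finset.le_sup (f := fun i => (P.coeff i).natAbs) hi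
    rw [← Int.cast_abs, Int.abs_eq_natAbs]
    exact_mod_cast h
  · rw [notMem_support_iff.1 hi, Int.cast_zero, abs_zero]
    exact Nat.cast_nonneg _

lemma one_le_polyNorm {R : ℤ[X]} (hR : R ≠ 0) : (1 : ℝ) ≤ polyNorm R :=
  le_trans (mod_cast Int.one_le_abs (leadingCoeff_ne_zero.2 hR))
    (abs_coeff_le_polyNorm R R.natDegree)

lemma aeval_add_aeval_eq {D : ℕ} {P R : ℤ[X]} (hP : P.natDegree ≤ 2) (hR : R.natDegree ≤ D + 2)
    (ξ : ℝ) :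
    aeval ξ P + aeval ξ R =
      (P.coeff 0 + R.coeff 0 : ℤ) + (P.coeff 1 + R.coeff 1 : ℤ) * ξ +
        (P.coeff 2 + R.coeff 2 : ℤ) * ξ ^ 2 +
        ∑ n ∈ Finset.Icc 1 D, R.coeff (n + 2) * ξ ^ (n + 2) := by
  have htail : ∑ n ∈ Finset.Icc 1 D, (R.coeff (n + 2) : ℝ) * ξ ^ (n + 2) =
      ∑ i ∈ Finset.Ico 3 (D + 2 + 1), (R.coeff i : ℝ) * ξ ^ i := by
    rw [← Finset.Ico_add_one_right_eq_Icc]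
    exact Finset.sum_Ico_add' (fun i => (R.coeff i : ℝ) * ξ ^ i) 1 (D + 1) 2
  rw [htail, aeval_eq_sum_range' (Nat.lt_succ_of_le hP), aeval_eq_sum_range' (Nat.lt_succ_of_le hR),
    ← Finset.sum_range_add_sum_Ico _ (show 3 ≤ D + 2 + 1 by lia)]
  simp only [Finset.sum_range_succ, Finset.sum_range_zero, zsmul_eq_mul]
  push_cast
  ring

lemma MarkoffApprox.exists_le_abs_aeval_add {ξ lam μ σ : ℝ} {a b c : ℕ → ℤ} {D q : ℕ}
    (h : MarkoffApprox ξ lam a b c) (hwin : HasNearWindows ξ lam a D q σ) (hD : 1 ≤ D)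
    (hμ : 1 ≤ μ) (hσ : 1 ≤ μ * (σ - D)) (hDgold : gold ^ D ≤ D * gold)
    (hq : 1 + D * gold ^ q ≤ gold ^ (q + D)) :
    ∃ C : ℝ, 0 < C ∧ ∀ P R : ℤ[X], R.natDegree = D + 2 → P.natDegree ≤ 2 →
      C * (1 + (polyNorm P : ℝ)) ^ (-gold) * (polyNorm R : ℝ) ^ (-(D * μ * gold ^ (q + 3))) ≤
        |aeval ξ P + aeval ξ R| := by
  obtain ⟨K, hK, hmain⟩ := h.exists_one_le_mul_abs hwin hD hμ hσ hDgold hq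
  refine ⟨K⁻¹, by positivity, fun P R hR hP => ?_⟩
  have hR0 : R ≠ 0 := ne_zero_of_natDegree_gt (n := 0) (by lia)
  have hH := one_le_polyNorm hR0
  have hsum : ∀ i, |((P.coeff i + R.coeff i : ℤ) : ℝ)| ≤ polyNorm P + polyNorm R := fun i => by
    rw [Int.cast_add]
    exact (abs_add_le _ _).trans
      (add_le_add (abs_coeff_le_polyNorm P i) (abs_coeff_le_polyNorm R i))
  have hlead : R.coeff (D + 2) ≠ 0 := hR ▸ leadingCoeff_ne_zero.2 hR0
  have hbound := hmain (P.coeff 0 + R.coeff 0) (P.coeff 1 + R.coeff 1) (P.coeff 2 + R.coeff 2)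
    (fun n => R.coeff (n + 2)) (polyNorm P) (polyNorm R) (Nat.cast_nonneg _) hH (hsum 1) (hsum 2)
    (fun n => abs_coeff_le_polyNorm R (n + 2)) hlead
  rw [← aeval_add_aeval_eq hP hR.le] at hbound
  rw [Real.rpow_neg (by positivity), Real.rpow_neg (by positivity), mul_assoc, ← mul_inv,
    ← mul_inv, inv_le_iff_one_le_mul₀' (by positivity)]
  exact hbound

lemma one_add_two_mul_gold_pow_five_le : 1 + 2 * gold ^ 5 ≤ gold ^ 7 := by
  have h7 : gold ^ 7 = 13 * gold + 8 := by
    linear_combination gold ^ 2 * gold_pow_five + 5 * gold_pow_three + 3 * gold_sq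
  linarith [gold_pow_five, lt_gold]

lemma one_add_three_mul_gold_pow_five_le : 1 + 3 * gold ^ 5 ≤ gold ^ 8 := by
  have h8 : gold ^ 8 = 21 * gold + 13 := by
    linear_combination gold ^ 3 * gold_pow_five + 5 * gold_pow_four + 3 * gold_pow_three
  linarith [gold_pow_five, lt_gold]

theorem stmt0_general {ξ : ℝ} {x : ℕ → Matrix (Fin 2) (Fin 2) ℤ} (hx : MarkoffSeq ξ x) {d : ℕ}
    (hd : d ∈ ({3, 4, 5} : Set ℕ)) :
    ∃ c : ℝ, 0 < c ∧ ∀ P R : ℤ[X], R.natDegree = d → P.natDegree ≤ 2 →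
      c * (1 + (polyNorm P : ℝ)) ^ (-gold) *
          (polyNorm R : ℝ) ^ (-(if d = 3 then gold ^ 4 else (d - 2) * gold ^ (d + 4))) ≤
        |aeval ξ P + aeval ξ R| := by
  obtain ⟨lam, a, b, c, h⟩ := hx.exists_markoffApprox
  have hgold := lt_gold
  obtain rfl | rfl | rfl := hd
  · have key := h.exists_le_abs_aeval_add (μ := 1) h.hasNearWindows_one le_rfl le_rfl
      (by norm_num [gold_sq]; linarith) (by norm_num) (by norm_num [gold_sq, add_comm])
    convert key using 9
    norm_num
  · have key := h.exists_le_abs_aeval_add (D := 2) (μ := 1)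
      (h.hasNearWindows_of_le_three (by norm_num)) one_le_two le_rfl
      (by norm_num; linarith) (by norm_num; linarith [gold_sq])
      (mod_cast one_add_two_mul_gold_pow_five_le)
    convert key using 9
    norm_num
  · have key := h.exists_le_abs_aeval_add (D := 3) (μ := gold)
      (h.hasNearWindows_of_le_three le_rfl) (by norm_num) (by linarith)
      (by push_cast; linarith [gold_sq]) (by push_cast; linarith [gold_pow_three])
      (mod_cast one_add_three_mul_gold_pow_five_le)
    convert key using 9
    norm_num
    ring_nf

lemma mul_polyNorm_rpow_le {d : ℕ} (hd : d ∈ ({3, 4, 5} : Set ℕ)) {R : ℤ[X]}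
    (hR : R.natDegree = d) {C : ℝ} (hC : 0 ≤ C) :
    C * (polyNorm R : ℝ) ^ (-(if d = 3 then gold ^ 4 else gold ^ (d + 7))) ≤
      C * (polyNorm R : ℝ) ^ (-(if d = 3 then gold ^ 4 else (d - 2) * gold ^ (d + 4))) := by
  have hR0 : R ≠ 0 := by
    rintro rfl
    simp [← hR] at hd
  refine mul_le_mul_of_nonneg_left
    (Real.rpow_le_rpow_of_exponent_le (one_le_polyNorm hR0) (neg_le_neg ?_)) hC
  split_ifs
  · exact le_rfl
  · have hd3 : (d : ℝ) - 2 ≤ gold ^ 3 := by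
      obtain rfl | rfl | rfl := hd <;> push_cast <;> linarith [gold_pow_three, lt_gold]
    calc ((d : ℝ) - 2) * gold ^ (d + 4) ≤ gold ^ 3 * gold ^ (d + 4) :=
          mul_le_mul_of_nonneg_right hd3 (pow_pos gold_pos _).le
      _ = gold ^ (d + 7) := by ring

theorem stmt0 (ξ : ℝ) (x : ℕ → Matrix (Fin 2) (Fin 2) ℤ) (hx : MarkoffSeq ξ x) :
    ∀ d : ℕ, d ∈ ({3, 4, 5} : Set ℕ) →
    ∃ c : ℝ, 0 < c ∧ ∀ P R : Polynomial ℤ, R.natDegree = d → P.natDegree ≤ 2 →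
      |Polynomial.aeval ξ P + Polynomial.aeval ξ R| ≥
        c * (1 + (polyNorm P : ℝ)) ^ (-gold) *
          (polyNorm R : ℝ) ^ (-(if d = 3 then gold ^ 4 else gold ^ (d + 7))) := fun _ hd =>
  (stmt0_general hx hd).imp fun _ ⟨hc, hmain⟩ => ⟨hc, fun P R hR hP =>
    (mul_polyNorm_rpow_le hd hR (by positivity)).trans (hmain P R hR hP)⟩
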